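/- arXiv:0806.0914 — 2 statements merged into one kernel-verified Lean document; each statement's English description precedes it below -/
import Mathlib

section
/- Computation of the topological entropy of Σ(u,v). Let k ≥ 2 and let u, v ∈ A^ℕ satisfy u₀ = 0, v₀ = k−1, and u ≼ σⁿu ≼ v and u ≼ σⁿv ≼ v for all n ≥ 0; if k = 2 assume additionally σu ≼ σv. Then: (a) if h(Σ(u,v)) > 0, there exist α ∈ [0,1] and β ∈ (1,∞) such that φ̄_∞^{α,β}(σu) = α and φ̄_∞^{α,β}(σv) = α+β−k+1; (b) for every α ∈ [0,1] and β ∈ (1,∞) satisfying φ̄_∞^{α,β}(σu) = α and φ̄_∞^{α,β}(σv) = α+β−k+1, one has h(Σ(u,v)) = log₂ β. -/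
open Filter Set

/-- The shift map on one-sided sequences. -/
def shft (x : ℕ → ℕ) : ℕ → ℕ := fun n => x (n + 1)

/-- Strict lexicographic order on one-sided sequences:
`x ≺ y` iff they differ and `x m < y m` at the first index `m` where they differ. -/
def lexLt (x y : ℕ → ℕ) : Prop := ∃ m, (∀ i, i < m → x i = y i) ∧ x m < y m

/-- Lexicographic order `x ≼ y` on one-sided sequences. -/
def lexLe (x y : ℕ → ℕ) : Prop := x = y ∨ lexLt x y

/-- The map `φ̄^{α,β} : ℝ → [0,1]`:  `0` for `t ≤ α`, `(t-α)/β` for `α ≤ t ≤ α+β`,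
`1` for `t ≥ α+β`. -/
noncomputable def phiB (α β t : ℝ) : ℝ :=
  if t ≤ α then 0 else if α + β ≤ t then 1 else (t - α) / β

/-- `φ̄ₙ^{α,β}(x) = φ̄^{α,β}(x₀ + φ̄^{α,β}(x₁ + ⋯ + φ̄^{α,β}(x_{n-1})⋯))`. -/
noncomputable def phiBN (α β : ℝ) : ℕ → (ℕ → ℕ) → ℝ
  | 0, _ => 0
  | n + 1, x => phiB α β (x 0 + phiBN α β n (shft x))

/-- `φ̄_∞^{α,β}(x) = limₙ φ̄ₙ^{α,β}(x)`; the sequence `φ̄ₙ^{α,β}(x)` is nondecreasing in `n`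
and bounded, so its limit is its supremum. -/
noncomputable def phiBInf (α β : ℝ) (x : ℕ → ℕ) : ℝ := ⨆ n, phiBN α β n x

/-- `T̂_{α,β}(x) = βx + α − ⌊βx + α⌋`. -/
noncomputable def Tlow (α β x : ℝ) : ℝ := β * x + α - ⌊β * x + α⌋

/-- `Ť_{α,β}(x) = βx + α + 1 − ⌈βx + α⌉`. -/
noncomputable def Thigh (α β x : ℝ) : ℝ := β * x + α + 1 - ⌈β * x + α⌉

/-- `k = ⌈α + β⌉`, the size of the alphabet `A = {0, …, k-1}`. -/
noncomputable def kAB (α β : ℝ) : ℕ := (⌈α + β⌉).toNat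

/-- The string `u^{α,β}`, the coding of the orbit of `0`:
`u^{α,β}ₙ = ⌊β T̂ⁿ_{α,β}(0) + α⌋`. -/
noncomputable def uItin (α β : ℝ) : ℕ → ℕ := fun n => (⌊β * (Tlow α β)^[n] 0 + α⌋).toNat

/-- The string `v^{α,β}`, the coding of the orbit of `1`:
`v^{α,β}ₙ = ⌈β Ťⁿ_{α,β}(1) + α⌉ − 1`. -/
noncomputable def vItin (α β : ℝ) : ℕ → ℕ := fun n => (⌈β * (Thigh α β)^[n] 1 + α⌉ - 1).toNat

/-- The shift space `Σ(u,v) = {x ∈ A^ℕ : u ≼ σⁿx ≼ v for all n ≥ 0}`, `A = {0,…,k-1}`. -/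
def SigSet (k : ℕ) (u v : ℕ → ℕ) : Set (ℕ → ℕ) :=
  {x | (∀ i, x i < k) ∧ ∀ n, lexLe u (shft^[n] x) ∧ lexLe (shft^[n] x) v}

/-- The number of words of length `n` in the language of `Σ(u,v)` (prefixes of elements). -/
noncomputable def nWords (k : ℕ) (u v : ℕ → ℕ) (n : ℕ) : ℕ :=
  Nat.card {w : Fin n → ℕ // ∃ x ∈ SigSet k u v, ∀ i : Fin n, x i.1 = w i}

/-- The topological entropy (base 2) of `Σ(u,v)`:
`h = limₙ (1/n) log₂ card(Lₙ)` (the limit exists by subadditivity, so it equals the limsup;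
it is `0` when `Σ(u,v) = ∅`). -/
noncomputable def entS (k : ℕ) (u v : ℕ → ℕ) : ℝ :=
  Filter.limsup (fun n : ℕ => Real.logb 2 (nWords k u v n) / (n : ℝ)) Filter.atTop

/-- Concatenation of the word `w₀ ⋯ w_{p-1}` (the first `p` letters of `w`) with the
string `y`. -/
def wcat (p : ℕ) (w y : ℕ → ℕ) : ℕ → ℕ := fun n => if n < p then w n else y (n - p)


/-! ### Basic facts on strings -/

def trunc (n : ℕ) (x : ℕ → ℕ) : ℕ → ℕ := fun i => if i < n then x i else 0

def scons (j : ℕ) (x : ℕ → ℕ) : ℕ → ℕ := fun n => Nat.casesOn n j x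

@[simp] lemma scons_zero (j : ℕ) (x : ℕ → ℕ) : scons j x 0 = j := rfl
@[simp] lemma shft_scons (j : ℕ) (x : ℕ → ℕ) : shft (scons j x) = x := rfl

lemma scons_shft (x : ℕ → ℕ) : scons (x 0) (shft x) = x := by
  funext n; cases n <;> rfl

lemma str_ext {x y : ℕ → ℕ} (h0 : x 0 = y 0) (h : shft x = shft y) : x = y := by
  rw [← scons_shft x, ← scons_shft y, h0, h]

lemma shft_iter (n : ℕ) (x : ℕ → ℕ) (i : ℕ) : (shft^[n] x) i = x (n + i) := by
  induction n generalizing x with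
  | zero => simp
  | succ n ih =>
    rw [Function.iterate_succ_apply, ih]
    simp [shft]; congr 1; omega

lemma trunc_eq_iff {n : ℕ} {x y : ℕ → ℕ} : trunc n x = trunc n y ↔ ∀ i < n, x i = y i := by
  constructor
  · intro h i hi
    have := congrFun h i
    simpa [trunc, hi] using this
  · intro h; funext i
    by_cases hi : i < n
    · simp [trunc, hi, h i hi]
    · simp [trunc, hi]

lemma shft_trunc (n : ℕ) (x : ℕ → ℕ) : shft (trunc (n + 1) x) = trunc n (shft x) := by
  funext i; simp [shft, trunc]

lemma trunc_zero (x : ℕ → ℕ) : trunc 0 x = fun _ => 0 := by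
  funext i; simp [trunc]

@[simp] lemma trunc_succ_zero (n : ℕ) (x : ℕ → ℕ) : trunc (n + 1) x 0 = x 0 := by
  simp [trunc]

lemma lexLt_irrefl (x : ℕ → ℕ) : ¬ lexLt x x := by
  rintro ⟨m, _, h⟩; exact lt_irrefl _ h

lemma lexLt_trans {x y z : ℕ → ℕ} (h1 : lexLt x y) (h2 : lexLt y z) : lexLt x z := by
  obtain ⟨m, hm, hm'⟩ := h1
  obtain ⟨n, hn, hn'⟩ := h2
  rcases lt_trichotomy m n with h | h | h
  · exact ⟨m, fun i hi => (hm i hi).trans (hn i (hi.trans h)), by rw [← hn m h]; exact hm'⟩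
  · subst h
    exact ⟨m, fun i hi => (hm i hi).trans (hn i hi), hm'.trans hn'⟩
  · exact ⟨n, fun i hi => (hm i (hi.trans h)).trans (hn i hi), by rw [hm n h]; exact hn'⟩

lemma lexLt_trichotomy (x y : ℕ → ℕ) : lexLt x y ∨ x = y ∨ lexLt y x := by
  classical
  by_cases h : x = y
  · exact Or.inr (Or.inl h)
  · have h' : ∃ i, x i ≠ y i := by
      by_contra hc; push Not at hc; exact h (funext hc)
    have hs := Nat.find_spec h'
    have hm : ∀ i, i < Nat.find h' → x i = y i := fun i hi => by
      have := Nat.find_min h' hi; simpa using this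
    rcases lt_or_gt_of_ne hs with h1 | h1
    · exact Or.inl ⟨_, hm, h1⟩
    · exact Or.inr (Or.inr ⟨_, fun i hi => (hm i hi).symm, h1⟩)

lemma lexLe_refl (x : ℕ → ℕ) : lexLe x x := Or.inl rfl

lemma lexLe_iff_not_lt {x y : ℕ → ℕ} : lexLe x y ↔ ¬ lexLt y x := by
  constructor
  · rintro (rfl | h) h'
    · exact lexLt_irrefl _ h'
    · exact lexLt_irrefl _ (lexLt_trans h h')
  · intro h
    rcases lexLt_trichotomy x y with h1 | h1 | h1
    · exact Or.inr h1
    · exact Or.inl h1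
    · exact absurd h1 h

lemma lexLt_of_lt_of_le {x y z : ℕ → ℕ} (h1 : lexLt x y) (h2 : lexLe y z) : lexLt x z := by
  rcases h2 with rfl | h2
  · exact h1
  · exact lexLt_trans h1 h2

lemma lexLt_of_le_of_lt {x y z : ℕ → ℕ} (h1 : lexLe x y) (h2 : lexLt y z) : lexLt x z := by
  rcases h1 with rfl | h1
  · exact h2
  · exact lexLt_trans h1 h2

lemma lexLe_trans {x y z : ℕ → ℕ} (h1 : lexLe x y) (h2 : lexLe y z) : lexLe x z := by
  rcases h1 with rfl | h1
  · exact h2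
  · exact Or.inr (lexLt_of_lt_of_le h1 h2)

lemma lexLt_cons_iff {x y : ℕ → ℕ} :
    lexLt x y ↔ x 0 < y 0 ∨ (x 0 = y 0 ∧ lexLt (shft x) (shft y)) := by
  constructor
  · rintro ⟨m, hm, h⟩
    cases m with
    | zero => exact Or.inl h
    | succ m =>
      exact Or.inr ⟨hm 0 (Nat.succ_pos _), m, fun i hi => hm (i + 1) (by omega), h⟩
  · rintro (h | ⟨h0, m, hm, h⟩)
    · exact ⟨0, fun i hi => absurd hi (Nat.not_lt_zero _), h⟩
    · refine ⟨m + 1, fun i hi => ?_, h⟩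
      cases i with
      | zero => exact h0
      | succ i => exact hm i (by omega)

lemma lexLe_cons_iff {x y : ℕ → ℕ} :
    lexLe x y ↔ x 0 < y 0 ∨ (x 0 = y 0 ∧ lexLe (shft x) (shft y)) := by
  rw [lexLe_iff_not_lt, lexLt_cons_iff, lexLe_iff_not_lt]
  constructor
  · intro h
    push Not at h
    rcases lt_or_eq_of_le h.1 with h1 | h1
    · exact Or.inl h1
    · exact Or.inr ⟨h1, h.2 h1.symm⟩
  · rintro (h | ⟨h0, h⟩) (h' | ⟨h1, h'⟩) <;> first | omega | exact h h'

lemma lexLt_of_trunc {n : ℕ} {x y : ℕ → ℕ} (h : lexLt (trunc n x) (trunc n y)) :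
    lexLt x y := by
  obtain ⟨m, hm, h⟩ := h
  have hmn : m < n := by
    by_contra hc
    simp [trunc, hc] at h
  refine ⟨m, fun i hi => ?_, by simpa [trunc, hmn] using h⟩
  have := hm i hi
  simpa [trunc, hi.trans hmn] using this

lemma trunc_le {n : ℕ} {x y : ℕ → ℕ} (h : lexLe x y) : lexLe (trunc n x) (trunc n y) := by
  rw [lexLe_iff_not_lt] at h ⊢
  exact fun h' => h (lexLt_of_trunc h')

/-- Data of the theorem, repackaged. -/
structure UV (k : ℕ) (u v : ℕ → ℕ) : Prop where
  hk : 2 ≤ k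
  hu : u ∈ SigSet k u v
  hv : v ∈ SigSet k u v
  u0 : u 0 = 0
  v0 : v 0 = k - 1

section
variable {k : ℕ} {u v : ℕ → ℕ}

lemma mem_sig_iff {x : ℕ → ℕ} : x ∈ SigSet k u v ↔
    x 0 < k ∧ lexLe u x ∧ lexLe x v ∧ shft x ∈ SigSet k u v := by
  constructor
  · rintro ⟨h1, h2⟩
    refine ⟨h1 0, (h2 0).1, (h2 0).2, fun i => h1 (i + 1), fun n => ?_⟩
    have := h2 (n + 1)
    rwa [Function.iterate_succ_apply] at this
  · rintro ⟨h0, h1, h2, h3, h4⟩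
    refine ⟨fun i => ?_, fun n => ?_⟩
    · cases i with
      | zero => exact h0
      | succ i => exact h3 i
    · cases n with
      | zero => exact ⟨h1, h2⟩
      | succ n => rw [Function.iterate_succ_apply]; exact h4 n

lemma shft_mem {x : ℕ → ℕ} (h : x ∈ SigSet k u v) : shft x ∈ SigSet k u v :=
  (mem_sig_iff.1 h).2.2.2

lemma iter_mem {x : ℕ → ℕ} (h : x ∈ SigSet k u v) (n : ℕ) : shft^[n] x ∈ SigSet k u v := by
  induction n with
  | zero => exact h
  | succ n ih => rw [Function.iterate_succ_apply']; exact shft_mem ih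

/-- words of length `n`, coded as truncated strings -/
def LL (k : ℕ) (u v : ℕ → ℕ) (n : ℕ) : Set (ℕ → ℕ) := trunc n '' SigSet k u v

lemma nWords_eq (n : ℕ) : nWords k u v n = (LL k u v n).ncard := by
  unfold nWords
  rw [← Nat.card_coe_set_eq]
  refine Nat.card_congr ⟨fun w => ⟨fun i => if h : i < n then w.1 ⟨i, h⟩ else 0, ?_⟩,
    fun w => ⟨fun i => w.1 i.1, ?_⟩, ?_, ?_⟩
  · obtain ⟨w, x, hx, hw⟩ := w
    refine ⟨x, hx, ?_⟩
    funext i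
    by_cases h : i < n
    · simp [trunc, h, ← hw]
    · simp [trunc, h]
  · obtain ⟨w, x, hx, rfl⟩ := w
    exact ⟨x, hx, fun i => by simp [trunc]⟩
  · rintro ⟨w, x, hx, hw⟩
    simp
  · rintro ⟨w, x, hx, rfl⟩
    ext i
    by_cases h : i < n
    · simp [h]
    · simp [trunc, h]

lemma LL_finite (n : ℕ) : (LL k u v n).Finite := by
  have : (LL k u v n) ⊆ Set.range
      (fun w : Fin n → Fin k => fun i => if h : i < n then (w ⟨i, h⟩ : ℕ) else 0) := by
    rintro _ ⟨x, hx, rfl⟩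
    refine ⟨fun i => ⟨x i, hx.1 i⟩, ?_⟩
    funext i
    by_cases h : i < n <;> simp [trunc, h]
  exact (Set.finite_range _).subset this

/-- number of words of length `n` that are smaller than `x` -/
noncomputable def cc (k : ℕ) (u v : ℕ → ℕ) (n : ℕ) (x : ℕ → ℕ) : ℕ :=
  {w | w ∈ LL k u v n ∧ lexLt w (trunc n x)}.ncard

lemma scons_mem (D : UV k u v) {n j : ℕ} {w : ℕ → ℕ} (hw : w ∈ LL k u v n) (hj : j < k)
    (h0 : j = 0 → ¬ lexLt w (trunc n (shft u)))
    (h1 : j = k - 1 → ¬ lexLt (trunc n (shft v)) w) : scons j w ∈ LL k u v (n + 1) := by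
  have hk := D.hk
  obtain ⟨y, hy, rfl⟩ := hw
  have key : ∀ z ∈ SigSet k u v, z 0 = j → trunc n (shft z) = trunc n y →
      scons j (trunc n y) ∈ LL k u v (n + 1) := by
    intro z hz hz0 hzy
    refine ⟨z, hz, str_ext (by simp [hz0]) ?_⟩
    rw [shft_trunc, shft_scons, hzy]
  by_cases hj0 : j = 0
  · by_cases he : trunc n y = trunc n (shft u)
    · exact key u D.hu (by rw [D.u0, hj0]) he.symm
    · have h2 : lexLt (shft u) y := by
        rcases lexLt_trichotomy (trunc n y) (trunc n (shft u)) with h | h | h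
        · exact absurd h (h0 hj0)
        · exact absurd h he
        · exact lexLt_of_trunc h
      refine key (scons j y) (mem_sig_iff.2 ⟨hj, ?_, ?_, hy⟩) rfl (by simp)
      · rw [lexLe_cons_iff]
        right
        exact ⟨by simp [D.u0, hj0], Or.inr h2⟩
      · rw [lexLe_cons_iff]
        left
        simp only [scons_zero, D.v0]; omega
  · have hu1 : lexLe u (scons j y) := by
      rw [lexLe_cons_iff]; left; simp only [scons_zero, D.u0]; omega
    by_cases hj1 : j = k - 1
    · by_cases he : trunc n y = trunc n (shft v)
      · exact key v D.hv (by rw [D.v0, hj1]) he.symm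
      · have h2 : lexLt y (shft v) := by
          rcases lexLt_trichotomy (trunc n y) (trunc n (shft v)) with h | h | h
          · exact lexLt_of_trunc h
          · exact absurd h he
          · exact absurd h (h1 hj1)
        refine key (scons j y) (mem_sig_iff.2 ⟨hj, hu1, ?_, hy⟩) rfl (by simp)
        rw [lexLe_cons_iff]
        right
        exact ⟨by simp [D.v0, hj1], Or.inr h2⟩
    · refine key (scons j y) (mem_sig_iff.2 ⟨hj, hu1, ?_, hy⟩) rfl (by simp)
      rw [lexLe_cons_iff]
      left
      simp only [scons_zero, D.v0]; omega

lemma ncard_scons_lt (m : ℕ) (L : Set (ℕ → ℕ)) :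
    {z : ℕ → ℕ | z 0 < m ∧ shft z ∈ L}.ncard = m * L.ncard := by
  have : {z : ℕ → ℕ | z 0 < m ∧ shft z ∈ L} =
      (fun q : ℕ × (ℕ → ℕ) => scons q.1 q.2) '' ((Set.Iio m) ×ˢ L) := by
    ext z
    constructor
    · rintro ⟨h1, h2⟩
      exact ⟨(z 0, shft z), ⟨h1, h2⟩, scons_shft z⟩
    · rintro ⟨⟨a, b⟩, ⟨h1, h2⟩, rfl⟩
      exact ⟨h1, h2⟩
  rw [this, Set.ncard_image_of_injective, Set.ncard_prod]
  · congr 1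
    rw [← Finset.coe_Iio, Set.ncard_coe_finset]; simp
  · rintro ⟨a, b⟩ ⟨c, d⟩ h
    have h1 := congrFun h 0
    have h2 := congrArg shft h
    simp at h1 h2
    rw [h1, h2]

lemma ncard_scons_eq (m : ℕ) (L : Set (ℕ → ℕ)) :
    {z : ℕ → ℕ | z 0 = m ∧ shft z ∈ L}.ncard = L.ncard := by
  have : {z : ℕ → ℕ | z 0 = m ∧ shft z ∈ L} = scons m '' L := by
    ext z
    constructor
    · rintro ⟨h1, h2⟩
      exact ⟨shft z, h2, by rw [← h1]; exact scons_shft z⟩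
    · rintro ⟨b, h2, rfl⟩
      exact ⟨rfl, h2⟩
  rw [this, Set.ncard_image_of_injective]
  intro a b h
  simpa using congrArg shft h

lemma finite_scons (m : ℕ) {L : Set (ℕ → ℕ)} (hL : L.Finite) :
    {z : ℕ → ℕ | z 0 < m ∧ shft z ∈ L}.Finite := by
  have := ((Set.finite_Iio m).prod hL).image (fun q : ℕ × (ℕ → ℕ) => scons q.1 q.2)
  refine this.subset ?_
  rintro z ⟨h1, h2⟩
  exact ⟨(z 0, shft z), ⟨h1, h2⟩, scons_shft z⟩

lemma cc_succ (D : UV k u v) (n : ℕ) {x : ℕ → ℕ} (hx : x ∈ SigSet k u v) :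
    cc k u v (n + 1) x + cc k u v n (shft u) =
      x 0 * nWords k u v n + cc k u v n (shft x) := by
  have hk := D.hk
  obtain ⟨hx0, hux, hxv, hsx⟩ := mem_sig_iff.1 hx
  rw [nWords_eq, ← ncard_scons_lt, cc, cc, cc, ← ncard_scons_eq 0
    {w | w ∈ LL k u v n ∧ lexLt w (trunc n (shft u))}, ← ncard_scons_eq (x 0)
    {w | w ∈ LL k u v n ∧ lexLt w (trunc n (shft x))}]
  have hf : ∀ P : (ℕ → ℕ) → Prop, {w | w ∈ LL k u v n ∧ P w}.Finite := fun P =>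
    (LL_finite n).subset (fun w hw => hw.1)
  have hfe : ∀ (m : ℕ) (P : (ℕ → ℕ) → Prop),
      {z : ℕ → ℕ | z 0 = m ∧ shft z ∈ {w | w ∈ LL k u v n ∧ P w}}.Finite := fun m P =>
    (finite_scons (m + 1) (hf P)).subset (fun z hz => ⟨by have := hz.1; omega, hz.2⟩)
  rw [← Set.ncard_union_eq _ ((LL_finite (n + 1)).subset (fun w hw => hw.1)) (hfe _ _),
    ← Set.ncard_union_eq _ (finite_scons _ (LL_finite n)) (hfe _ _)]
  · congr 1
    ext z
    simp only [Set.mem_union, Set.mem_ofPred_eq]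
    have hlt : lexLt z (trunc (n + 1) x) ↔
        z 0 < x 0 ∨ (z 0 = x 0 ∧ lexLt (shft z) (trunc n (shft x))) := by
      rw [lexLt_cons_iff, shft_trunc, trunc_succ_zero]
    constructor
    · rintro (⟨hz, hz2⟩ | ⟨hz0, hz, hz2⟩)
      · have hs : shft z ∈ LL k u v n := by
          obtain ⟨y, hy, rfl⟩ := hz
          exact ⟨shft y, shft_mem hy, (shft_trunc _ _).symm⟩
        rcases hlt.1 hz2 with h | ⟨h, h'⟩
        · exact Or.inl ⟨h, hs⟩
        · exact Or.inr ⟨h, hs, h'⟩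
      · by_cases h : x 0 = 0
        · right
          refine ⟨by rw [hz0, h], hz, lexLt_of_lt_of_le hz2 (trunc_le ?_)⟩
          rw [lexLe_cons_iff] at hux
          rcases hux with h' | h'
          · rw [h] at h'; omega
          · exact h'.2
        · left; exact ⟨by omega, hz⟩
    · intro h
      have hs : shft z ∈ LL k u v n := by rcases h with h | h; exacts [h.2, h.2.1]
      have hz : z 0 < x 0 ∨ (z 0 = x 0 ∧ lexLt (shft z) (trunc n (shft x))) := by
        rcases h with h | h
        exacts [Or.inl h.1, Or.inr ⟨h.1, h.2.2⟩]
      by_cases hc : z 0 = 0 ∧ lexLt (shft z) (trunc n (shft u))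
      · exact Or.inr ⟨hc.1, hs, hc.2⟩
      · left
        refine ⟨?_, hlt.2 hz⟩
        rw [← scons_shft z]
        refine scons_mem D hs ?_ (fun h0 h1 => hc ⟨h0, h1⟩) ?_
        · rcases hz with hz | hz <;> omega
        · intro h0 h1
          rcases hz with hz | ⟨hz, hz'⟩
          · omega
          · have h2 : lexLe (shft x) (shft v) := by
              rw [lexLe_cons_iff] at hxv
              rcases hxv with h' | h'
              · rw [D.v0] at h'; omega
              · exact h'.2
            exact lexLt_irrefl _ (lexLt_trans (lexLt_of_lt_of_le hz' (trunc_le h2)) h1)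
  · rw [Set.disjoint_left]
    rintro z ⟨h1, _⟩ ⟨h2, _⟩
    omega
  · rw [Set.disjoint_left]
    rintro z ⟨⟨y, hy, rfl⟩, _⟩ ⟨h2, _, h3⟩
    rw [shft_trunc] at h3
    have hy' := (mem_sig_iff.1 hy).2.1
    rw [lexLe_cons_iff, D.u0] at hy'
    rw [trunc_succ_zero] at h2
    rcases hy' with h' | h'
    · omega
    · exact lexLt_irrefl _ (lexLt_of_le_of_lt (trunc_le h'.2) h3)

lemma cc_zero (x : ℕ → ℕ) : cc k u v 0 x = 0 := by
  have : {w | w ∈ LL k u v 0 ∧ lexLt w (trunc 0 x)} = ∅ := by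
    ext w
    simp only [Set.mem_ofPred_eq, Set.mem_empty_iff_false, iff_false]
    rintro ⟨_, m, _, h⟩
    simp [trunc] at h
  rw [cc, this, Set.ncard_empty]

lemma cc_u (n : ℕ) : cc k u v n u = 0 := by
  have : {w | w ∈ LL k u v n ∧ lexLt w (trunc n u)} = ∅ := by
    ext w
    simp only [Set.mem_ofPred_eq, Set.mem_empty_iff_false, iff_false]
    rintro ⟨⟨y, hy, rfl⟩, h⟩
    exact lexLe_iff_not_lt.1 (trunc_le (mem_sig_iff.1 hy).2.1) h
  rw [cc, this, Set.ncard_empty]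

lemma cc_v (D : UV k u v) (n : ℕ) : nWords k u v n = cc k u v n v + 1 := by
  have : LL k u v n = insert (trunc n v) {w | w ∈ LL k u v n ∧ lexLt w (trunc n v)} := by
    ext w
    constructor
    · intro hw
      obtain ⟨y, hy, rfl⟩ := id hw
      rcases trunc_le (n := n) (mem_sig_iff.1 hy).2.2.1 with h | h
      · exact Or.inl h
      · exact Or.inr ⟨hw, h⟩
    · rintro (rfl | h)
      · exact ⟨v, D.hv, rfl⟩
      · exact h.1
  rw [nWords_eq, this, Set.ncard_insert_of_notMem (fun h => lexLt_irrefl _ h.2)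
    ((LL_finite n).subset (fun w hw => hw.1))]
  rfl

lemma cc_le (n : ℕ) (x : ℕ → ℕ) : cc k u v n x ≤ nWords k u v n := by
  rw [nWords_eq]
  exact Set.ncard_le_ncard (fun w hw => hw.1) (LL_finite n)

lemma nWords_pos (D : UV k u v) (n : ℕ) : 0 < nWords k u v n := by
  rw [cc_v D]; omega

lemma nWords_add_le (m n : ℕ) :
    nWords k u v (m + n) ≤ nWords k u v m * nWords k u v n := by
  rw [nWords_eq, nWords_eq, nWords_eq, ← Set.ncard_prod]
  refine Set.ncard_le_ncard_of_injOn (fun w => (trunc m w, trunc n (shft^[m] w))) ?_ ?_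
    ((LL_finite m).prod (LL_finite n))
  · rintro _ ⟨x, hx, rfl⟩
    refine ⟨⟨x, hx, ?_⟩, ⟨shft^[m] x, iter_mem hx m, ?_⟩⟩
    · rw [trunc_eq_iff]; intro i hi; simp [trunc]; intro h; omega
    · rw [trunc_eq_iff]; intro i hi; simp [trunc, shft_iter]; intro h; omega
  · rintro _ ⟨x, hx, rfl⟩ _ ⟨y, hy, rfl⟩ h
    simp only [Prod.mk.injEq, trunc_eq_iff] at h
    funext i
    by_cases hi : i < m
    · exact h.1 i hi
    · by_cases hi2 : i < m + n
      · have := h.2 (i - m) (by omega)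
        rw [shft_iter, shft_iter] at this
        rwa [show m + (i - m) = i by omega] at this
      · simp [trunc, hi2]

end

/-! ### Entropy and generating functions -/

section
variable {k : ℕ} {u v : ℕ → ℕ}

lemma nWords_posR (D : UV k u v) (n : ℕ) : (0 : ℝ) < nWords k u v n := by
  exact_mod_cast nWords_pos D n

lemma one_le_nWords (D : UV k u v) (n : ℕ) : (1 : ℝ) ≤ nWords k u v n := by
  exact_mod_cast nWords_pos D n

lemma subadd (D : UV k u v) : Subadditive (fun n => Real.logb 2 (nWords k u v n)) := by
  intro m n
  rw [← Real.logb_mul (nWords_posR D m).ne' (nWords_posR D n).ne']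
  apply Real.logb_le_logb_of_le (by norm_num) (nWords_posR D _)
  exact_mod_cast nWords_add_le m n

lemma ent_eq_lim (D : UV k u v) : entS k u v = (subadd D).lim ∧
    BddBelow (Set.range fun n : ℕ => Real.logb 2 (nWords k u v n) / n) := by
  have hb : BddBelow (Set.range fun n : ℕ => Real.logb 2 (nWords k u v n) / n) := by
    refine ⟨0, ?_⟩
    rintro _ ⟨n, rfl⟩
    exact div_nonneg (Real.logb_nonneg (by norm_num) (one_le_nWords D n)) (Nat.cast_nonneg _)
  exact ⟨((subadd D).tendsto_lim hb).limsup_eq, hb⟩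

lemma ent_tendsto (D : UV k u v) :
    Tendsto (fun n : ℕ => Real.logb 2 (nWords k u v n) / n) atTop (nhds (entS k u v)) := by
  rw [(ent_eq_lim D).1]
  exact (subadd D).tendsto_lim (ent_eq_lim D).2

/-- the exponential growth rate -/
noncomputable def lam (k : ℕ) (u v : ℕ → ℕ) : ℝ := (2 : ℝ) ^ (entS k u v)

lemma lam_pos : 0 < lam k u v := Real.rpow_pos_of_pos (by norm_num) _

lemma lam_pow_le (D : UV k u v) (n : ℕ) : lam k u v ^ n ≤ nWords k u v n := by
  rcases Nat.eq_zero_or_pos n with rfl | hn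
  · simpa using one_le_nWords D 0
  · have h := (subadd D).lim_le_div (ent_eq_lim D).2 hn.ne'
    rw [← (ent_eq_lim D).1, le_div_iff₀ (by exact_mod_cast hn)] at h
    rw [Real.le_logb_iff_rpow_le (by norm_num) (nWords_posR D n)] at h
    rw [lam, ← Real.rpow_natCast, ← Real.rpow_mul (by norm_num)]
    exact h

lemma eventually_le_pow (D : UV k u v) {ρ : ℝ} (h : lam k u v < ρ) :
    ∀ᶠ n in atTop, (nWords k u v n : ℝ) ≤ ρ ^ n := by
  have hρ : 0 < ρ := lam_pos.trans h
  have h1 : entS k u v < Real.logb 2 ρ := by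
    rw [Real.lt_logb_iff_rpow_lt (by norm_num) hρ]; exact h
  filter_upwards [(ent_tendsto D).eventually_lt_const h1, eventually_gt_atTop 0] with n hn hn0
  rw [div_lt_iff₀ (by exact_mod_cast hn0), Real.logb_lt_iff_lt_rpow (by norm_num)
    (nWords_posR D n), Real.rpow_mul (by norm_num), Real.rpow_logb (by norm_num) (by norm_num) hρ,
    Real.rpow_natCast] at hn
  exact hn.le

lemma summable_nWords (D : UV k u v) {s : ℝ} (hs : 0 < s) (h : s * lam k u v < 1) :
    Summable (fun n => (nWords k u v n : ℝ) * s ^ n) := by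
  obtain ⟨ρ, h1, h2⟩ := exists_between (show lam k u v < 1 / s by
    rw [lt_div_iff₀ hs]; linarith)
  have hρ : 0 < ρ := lam_pos.trans h1
  rw [lt_div_iff₀ hs] at h2
  have hg : Summable (fun n : ℕ => (ρ * s) ^ n) := summable_geometric_of_lt_one (by positivity) h2
  refine Summable.of_norm_bounded_eventually_nat hg ?_
  filter_upwards [eventually_le_pow D h1] with n hn
  rw [Real.norm_of_nonneg (by positivity), mul_pow]
  gcongr

lemma lam_le_of (D : UV k u v) {ρ C : ℝ} (hρ : 0 < ρ)
    (h : ∀ n, (nWords k u v n : ℝ) ≤ C * (n + 1) * ρ ^ n) : lam k u v ≤ ρ := by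
  by_contra hc
  push Not at hc
  set r := ρ / lam k u v with hr
  have hl : 0 < lam k u v := lam_pos
  have hr0 : 0 < r := div_pos hρ hl
  have hr1 : r < 1 := by rw [hr, div_lt_one hl]; exact hc
  have h1 : Tendsto (fun n : ℕ => C * (n * r ^ n + r ^ n)) atTop (nhds (C * (0 + 0))) :=
    ((tendsto_self_mul_const_pow_of_lt_one hr0.le hr1).add
      (tendsto_pow_atTop_nhds_zero_of_lt_one hr0.le hr1)).const_mul C
  have h2 : ∀ n : ℕ, 1 ≤ C * (n * r ^ n + r ^ n) := by
    intro n
    have := (lam_pow_le D n).trans (h n)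
    have hp : 0 < lam k u v ^ n := by positivity
    rw [hr, div_pow]
    have e : C * (n * (ρ ^ n / lam k u v ^ n) + ρ ^ n / lam k u v ^ n) =
      (C * (n + 1) * ρ ^ n) / lam k u v ^ n := by ring
    rw [e, le_div_iff₀ hp]; linarith
  have := ge_of_tendsto' h1 h2
  norm_num at this

noncomputable def GG (k : ℕ) (u v : ℕ → ℕ) (s : ℝ) : ℝ := ∑' n, (nWords k u v n : ℝ) * s ^ n
noncomputable def gg (k : ℕ) (u v : ℕ → ℕ) (s : ℝ) (x : ℕ → ℕ) : ℝ :=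
  (∑' n, (cc k u v n x : ℝ) * s ^ n) / GG k u v s

lemma summable_cc {s : ℝ} (hs : 0 < s)
    (hN : Summable (fun n => (nWords k u v n : ℝ) * s ^ n)) (x : ℕ → ℕ) :
    Summable (fun n => (cc k u v n x : ℝ) * s ^ n) := by
  refine Summable.of_nonneg_of_le (fun n => by positivity) (fun n => ?_) hN
  have : (cc k u v n x : ℝ) ≤ nWords k u v n := by exact_mod_cast cc_le n x
  gcongr

lemma GG_pos (D : UV k u v) {s : ℝ} (hs : 0 < s)
    (hN : Summable (fun n => (nWords k u v n : ℝ) * s ^ n)) : 0 < GG k u v s :=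
  hN.tsum_pos (fun n => by positivity) 0 (by have := nWords_posR D 0; positivity)

lemma gg_nonneg {s : ℝ} (hs : 0 < s) (x : ℕ → ℕ) : 0 ≤ gg k u v s x :=
  div_nonneg (tsum_nonneg fun n => by positivity) (tsum_nonneg fun n => by positivity)

lemma gg_le_one (D : UV k u v) {s : ℝ} (hs : 0 < s)
    (hN : Summable (fun n => (nWords k u v n : ℝ) * s ^ n)) (x : ℕ → ℕ) :
    gg k u v s x ≤ 1 := by
  rw [gg, div_le_one (GG_pos D hs hN)]
  refine (summable_cc hs hN x).tsum_le_tsum (fun n => ?_) hN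
  have : (cc k u v n x : ℝ) ≤ nWords k u v n := by exact_mod_cast cc_le n x
  gcongr

lemma gg_u {s : ℝ} : gg k u v s u = 0 := by
  simp [gg, cc_u]

lemma gg_v (D : UV k u v) {s : ℝ} (hs : 0 < s) (hs1 : s < 1)
    (hN : Summable (fun n => (nWords k u v n : ℝ) * s ^ n)) :
    gg k u v s v = 1 - 1 / ((1 - s) * GG k u v s) := by
  have hG := GG_pos D hs hN
  have hg : Summable (fun n : ℕ => s ^ n) := summable_geometric_of_lt_one hs.le hs1
  have e : (∑' n, (cc k u v n v : ℝ) * s ^ n) = GG k u v s - (1 - s)⁻¹ := by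
    rw [GG, ← tsum_geometric_of_lt_one hs.le hs1, ← hN.tsum_sub hg]
    congr 1; funext n
    rw [cc_v D n]; push_cast; ring
  have : 1 - s ≠ 0 := by linarith
  rw [gg, e]; field_simp

lemma gg_eq (D : UV k u v) {s : ℝ} (hs : 0 < s)
    (hN : Summable (fun n => (nWords k u v n : ℝ) * s ^ n)) {x : ℕ → ℕ}
    (hx : x ∈ SigSet k u v) :
    s⁻¹ * gg k u v s x + gg k u v s (shft u) = x 0 + gg k u v s (shft x) := by
  have hG := GG_pos D hs hN
  have hc := summable_cc hs hN
  have e : (∑' n, (cc k u v n x : ℝ) * s ^ n) = s * (x 0 * GG k u v s +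
      (∑' n, (cc k u v n (shft x) : ℝ) * s ^ n) - ∑' n, (cc k u v n (shft u) : ℝ) * s ^ n) := by
    rw [(hc x).tsum_eq_zero_add, cc_zero, GG, ← tsum_mul_left,
      ← (hN.mul_left _).tsum_add (hc _), ← ((hN.mul_left _).add (hc _)).tsum_sub (hc _),
      ← tsum_mul_left]
    simp only [Nat.cast_zero, zero_mul, zero_add]
    congr 1; funext n
    have h := cc_succ D n hx
    have h' : (cc k u v (n + 1) x : ℝ) =
      x 0 * nWords k u v n + cc k u v n (shft x) - cc k u v n (shft u) := by
      have : (cc k u v (n + 1) x : ℝ) + cc k u v n (shft u) =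
        x 0 * nWords k u v n + cc k u v n (shft x) := by exact_mod_cast h
      linarith
    rw [h']; ring
  simp only [gg]
  rw [e]; field_simp; ring

/-! ### Linear conjugacies -/

structure Lin (k : ℕ) (u v : ℕ → ℕ) (α β : ℝ) (φ : (ℕ → ℕ) → ℝ) : Prop where
  b1 : 1 < β
  nn : ∀ x ∈ SigSet k u v, 0 ≤ φ x
  le1 : ∀ x ∈ SigSet k u v, φ x ≤ 1
  eq : ∀ x ∈ SigSet k u v, β * φ x + α = x 0 + φ (shft x)
  fu : φ u = 0
  fv : φ v = 1

lemma phiB_eq {α β : ℝ} (hβ : 0 < β) (t : ℝ) :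
    phiB α β t = max 0 (min 1 ((t - α) / β)) := by
  unfold phiB
  split_ifs with h1 h2
  · have : (t - α) / β ≤ 0 := div_nonpos_of_nonpos_of_nonneg (by linarith) hβ.le
    rw [min_eq_right (by linarith), max_eq_left this]
  · have : 1 ≤ (t - α) / β := by rw [le_div_iff₀ hβ]; linarith
    rw [min_eq_left this]; simp
  · push Not at h1 h2
    have : 0 ≤ (t - α) / β := div_nonneg (by linarith) hβ.le
    have h3 : (t - α) / β ≤ 1 := by rw [div_le_one hβ]; linarith
    rw [min_eq_right h3, max_eq_right this]

lemma phiB_mono {α β : ℝ} (hβ : 0 < β) : Monotone (phiB α β) := by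
  intro s t h
  rw [phiB_eq hβ, phiB_eq hβ]
  gcongr

lemma phiB_cont {α β : ℝ} (hβ : 0 < β) : Continuous (phiB α β) := by
  have : phiB α β = fun t => max 0 (min 1 ((t - α) / β)) := funext (phiB_eq hβ)
  rw [this]; fun_prop

lemma phiB_nonneg {α β : ℝ} (hβ : 0 < β) (t : ℝ) : 0 ≤ phiB α β t := by
  rw [phiB_eq hβ]; exact le_max_left _ _

lemma phiB_le_one {α β : ℝ} (hβ : 0 < β) (t : ℝ) : phiB α β t ≤ 1 := by
  rw [phiB_eq hβ]; simp

lemma phiB_of_mem {α β : ℝ} (hβ : 0 < β) {t : ℝ} (h1 : α ≤ t) (h2 : t ≤ α + β) :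
    phiB α β t = (t - α) / β := by
  have : 0 ≤ (t - α) / β := div_nonneg (by linarith) hβ.le
  have h3 : (t - α) / β ≤ 1 := by rw [div_le_one hβ]; linarith
  rw [phiB_eq hβ, min_eq_right h3, max_eq_right this]

lemma phiBN_nonneg {α β : ℝ} (hβ : 0 < β) (n : ℕ) (x : ℕ → ℕ) : 0 ≤ phiBN α β n x := by
  cases n with
  | zero => simp [phiBN]
  | succ n => exact phiB_nonneg hβ _

lemma phiBN_le_one {α β : ℝ} (hβ : 0 < β) (n : ℕ) (x : ℕ → ℕ) : phiBN α β n x ≤ 1 := by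
  cases n with
  | zero => simp [phiBN]
  | succ n => exact phiB_le_one hβ _

lemma phiBN_mono {α β : ℝ} (hβ : 0 < β) (x : ℕ → ℕ) : Monotone (fun n => phiBN α β n x) := by
  refine monotone_nat_of_le_succ fun n => ?_
  induction n generalizing x with
  | zero => exact phiBN_nonneg hβ 1 x
  | succ n ih => exact phiB_mono hβ (by have := ih (shft x); linarith)

lemma phiBN_tendsto {α β : ℝ} (hβ : 0 < β) (x : ℕ → ℕ) :
    Tendsto (fun n => phiBN α β n x) atTop (nhds (phiBInf α β x)) :=
  tendsto_atTop_ciSup (phiBN_mono hβ x) ⟨1, by rintro _ ⟨n, rfl⟩; exact phiBN_le_one hβ n x⟩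

lemma phiBInf_step {α β : ℝ} (hβ : 0 < β) (x : ℕ → ℕ) :
    phiBInf α β x = phiB α β (x 0 + phiBInf α β (shft x)) := by
  have h1 := (tendsto_add_atTop_iff_nat 1).2 (phiBN_tendsto (α := α) hβ x)
  have h2 := ((phiB_cont (α := α) hβ).tendsto (x 0 + phiBInf α β (shft x))).comp
    ((phiBN_tendsto (α := α) hβ (shft x)).const_add (x 0 : ℝ))
  exact tendsto_nhds_unique h1 h2

lemma phiBInf_nonneg {α β : ℝ} (hβ : 0 < β) (x : ℕ → ℕ) : 0 ≤ phiBInf α β x := by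
  rw [phiBInf_step hβ]; exact phiB_nonneg hβ _

lemma phiBInf_le_one {α β : ℝ} (hβ : 0 < β) (x : ℕ → ℕ) : phiBInf α β x ≤ 1 := by
  rw [phiBInf_step hβ]; exact phiB_le_one hβ _

lemma phiBInf_mono {α β : ℝ} (hβ : 0 < β) {x y : ℕ → ℕ} (h : lexLe x y) :
    phiBInf α β x ≤ phiBInf α β y := by
  rcases h with rfl | ⟨m, hm, h⟩
  · exact le_rfl
  · induction m generalizing x y with
    | zero =>
      rw [phiBInf_step hβ x, phiBInf_step hβ y]
      apply phiB_mono hβ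
      have h1 := phiBInf_le_one (α := α) hβ (shft x)
      have h2 := phiBInf_nonneg (α := α) hβ (shft y)
      have h3 : (x 0 : ℝ) + 1 ≤ y 0 := by exact_mod_cast h
      linarith
    | succ m ih =>
      rw [phiBInf_step hβ x, phiBInf_step hβ y]
      apply phiB_mono hβ
      rw [hm 0 (Nat.succ_pos _)]
      have := ih (x := shft x) (y := shft y) (fun i hi => hm (i + 1) (by omega)) h
      linarith

lemma phiBInf_eq_of {α β : ℝ} (hβ : 1 < β) {φ : (ℕ → ℕ) → ℝ}
    (nn : ∀ x ∈ SigSet k u v, 0 ≤ φ x) (le1 : ∀ x ∈ SigSet k u v, φ x ≤ 1)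
    (eq : ∀ x ∈ SigSet k u v, β * φ x + α = x 0 + φ (shft x))
    {x : ℕ → ℕ} (hx : x ∈ SigSet k u v) : phiBInf α β x = φ x := by
  have hβ0 : 0 < β := by linarith
  have key : ∀ (n : ℕ), ∀ x ∈ SigSet k u v, phiBN α β n x ≤ φ x ∧
      φ x ≤ phiBN α β n x + (β⁻¹) ^ n := by
    intro n
    induction n with
    | zero => intro x hx; simp [phiBN]; exact ⟨nn x hx, le1 x hx⟩
    | succ n ih =>
      intro x hx
      obtain ⟨h1, h2⟩ := ih _ (shft_mem hx)
      have e : φ x = phiB α β (x 0 + φ (shft x)) := by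
        rw [← eq x hx, phiB_of_mem hβ0]
        · field_simp; ring
        · have := nn x hx; nlinarith
        · have := le1 x hx; nlinarith
      constructor
      · rw [e]; exact phiB_mono hβ0 (by linarith)
      · rw [e]
        have : phiB α β (x 0 + φ (shft x)) ≤
            phiB α β ((x 0 + phiBN α β n (shft x)) + (β⁻¹) ^ n) := phiB_mono hβ0 (by linarith)
        refine this.trans ?_
        change _ ≤ phiB α β (x 0 + phiBN α β n (shft x)) + _
        generalize (x 0 + phiBN α β n (shft x)) = t
        have hp : 0 < (β⁻¹) ^ n := by positivity
        have hp' : 0 < (β⁻¹) ^ (n + 1) := by positivity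
        rw [phiB_eq hβ0, phiB_eq hβ0]
        have e2 : (t + (β⁻¹) ^ n - α) / β = (t - α) / β + (β⁻¹) ^ (n + 1) := by
          rw [pow_succ]; field_simp; ring
        rw [e2]
        refine max_le (by positivity) ?_
        rcases le_total 1 ((t - α) / β) with h | h
        · have : max 0 (min 1 ((t - α) / β)) = 1 := by rw [min_eq_left h]; simp
          rw [this]
          exact (min_le_left _ _).trans (by linarith)
        · have : (t - α) / β ≤ max 0 (min 1 ((t - α) / β)) := by
            rw [min_eq_right h]; exact le_max_right _ _
          exact (min_le_right _ _).trans (by linarith)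
  have h1 := phiBN_tendsto (α := α) hβ0 x
  have h2 : Tendsto (fun n => phiBN α β n x + (β⁻¹) ^ n) atTop (nhds (phiBInf α β x + 0)) :=
    h1.add (tendsto_pow_atTop_nhds_zero_of_lt_one (by positivity) (inv_lt_one_of_one_lt₀ hβ))
  rw [add_zero] at h2
  exact le_antisymm (le_of_tendsto' h1 fun n => (key n x hx).1)
    (ge_of_tendsto' h2 fun n => (key n x hx).2)

lemma lin_of_phi (D : UV k u v) {α β : ℝ} (hα : α ∈ Set.Icc (0 : ℝ) 1) (hβ : 1 < β)
    (h1 : phiBInf α β (shft u) = α) (h2 : phiBInf α β (shft v) = α + β - k + 1) :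
    Lin k u v α β (phiBInf α β) := by
  have hβ0 : 0 < β := by linarith
  have hk := D.hk
  have hk1 : ((k - 1 : ℕ) : ℝ) = k - 1 := by
    rw [Nat.cast_sub (by omega)]; simp
  refine ⟨hβ, fun x _ => phiBInf_nonneg hβ0 x, fun x _ => phiBInf_le_one hβ0 x, ?_, ?_, ?_⟩
  · intro x hx
    obtain ⟨hx0, hux, hxv, hsx⟩ := mem_sig_iff.1 hx
    have n0 := phiBInf_nonneg (α := α) hβ0 (shft x)
    have n1 := phiBInf_le_one (α := α) hβ0 (shft x)
    have v0 := phiBInf_nonneg (α := α) hβ0 (shft v)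
    have g1 : α ≤ x 0 + phiBInf α β (shft x) := by
      rw [lexLe_cons_iff, D.u0] at hux
      rcases hux with h | ⟨h, h'⟩
      · have : (1 : ℝ) ≤ x 0 := by exact_mod_cast h
        linarith [hα.2]
      · have := phiBInf_mono (α := α) hβ0 h'
        have h3 : (0 : ℝ) ≤ x 0 := by positivity
        linarith
    have g2 : x 0 + phiBInf α β (shft x) ≤ α + β := by
      rw [lexLe_cons_iff, D.v0] at hxv
      rcases hxv with h | ⟨h, h'⟩
      · have : (x 0 : ℝ) + 1 ≤ ((k - 1 : ℕ) : ℝ) := by exact_mod_cast h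
        linarith
      · have := phiBInf_mono (α := α) hβ0 h'
        rw [h, hk1]; linarith
    rw [phiBInf_step hβ0 x, phiB_of_mem hβ0 g1 g2]
    field_simp; ring
  · rw [phiBInf_step hβ0, h1, D.u0, phiB_of_mem hβ0] <;> simp; linarith
  · rw [phiBInf_step hβ0, h2, D.v0, hk1, phiB_of_mem hβ0]
    · field_simp; ring
    · linarith
    · linarith

/-! ### Part (a) -/

lemma part_a (D : UV k u v) (h : 0 < entS k u v) :
    ∃ α β : ℝ, α ∈ Set.Icc (0 : ℝ) 1 ∧ 1 < β ∧
        phiBInf α β (shft u) = α ∧ phiBInf α β (shft v) = α + β - k + 1 := by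
  set β := lam k u v with hβ
  have hβ1 : 1 < β := Real.one_lt_rpow (by norm_num) h
  have hβ0 : 0 < β := by linarith
  set s : ℕ → ℝ := fun n => β⁻¹ * (1 - 1 / ((n : ℝ) + 2)) with hsdef
  have hq : ∀ n : ℕ, 0 < 1 - 1 / ((n : ℝ) + 2) ∧ 1 - 1 / ((n : ℝ) + 2) < 1 := by
    intro n
    have : (0 : ℝ) < (n : ℝ) + 2 := by positivity
    have h1 : 1 / ((n : ℝ) + 2) < 1 := by
      rw [div_lt_one this]; have : (0 : ℝ) ≤ n := by positivity
      linarith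
    have h2 : 0 < 1 / ((n : ℝ) + 2) := by positivity
    constructor <;> linarith
  have hs0 : ∀ n, 0 < s n := fun n => mul_pos (by positivity) (hq n).1
  have hsl : ∀ n, s n * β = 1 - 1 / ((n : ℝ) + 2) := fun n => by
    simp only [hsdef]; field_simp
  have hsl1 : ∀ n, s n * β < 1 := fun n => by rw [hsl]; exact (hq n).2
  have hs1 : ∀ n, s n < β⁻¹ := fun n => by
    rw [← one_div, lt_div_iff₀ hβ0]; exact hsl1 n
  have hbi : β⁻¹ < 1 := inv_lt_one_of_one_lt₀ hβ1
  have hN : ∀ n, Summable (fun m => (nWords k u v m : ℝ) * s n ^ m) := fun n =>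
    summable_nWords D (hs0 n) (hsl1 n)
  have hG : ∀ n : ℕ, (n : ℝ) + 2 ≤ GG k u v (s n) := by
    intro n
    have hg : Summable (fun m : ℕ => (β * s n) ^ m) :=
      summable_geometric_of_lt_one (mul_nonneg hβ0.le (hs0 n).le) (by rw [mul_comm]; exact hsl1 n)
    have := hg.tsum_le_tsum (fun m => ?_) (hN n)
    · rw [tsum_geometric_of_lt_one (mul_nonneg hβ0.le (hs0 n).le)
        (by rw [mul_comm]; exact hsl1 n), mul_comm, hsl] at this
      simpa [GG] using this
    · rw [mul_pow]
      have := lam_pow_le D m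
      have h0 := (hs0 n).le
      gcongr
  -- limits along an ultrafilter
  have hlim : ∀ x, ∃ a ∈ Set.Icc (0 : ℝ) 1,
      Tendsto (fun n => gg k u v (s n) x) (hyperfilter ℕ) (nhds a) := by
    intro x
    have hc : IsCompact (Set.Icc (0 : ℝ) 1) := isCompact_Icc
    have := hc.ultrafilter_le_nhds ((hyperfilter ℕ).map (fun n => gg k u v (s n) x)) (by
      rw [le_principal_iff]
      refine Filter.mem_map.2 (Filter.univ_mem' fun n => ?_)
      exact ⟨gg_nonneg (hs0 n) x, gg_le_one D (hs0 n) (hN n) x⟩)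
    exact this
  choose ψ hψ hψt using hlim
  have hat : (hyperfilter ℕ : Filter ℕ) ≤ atTop := by
    rw [← Nat.cofinite_eq_atTop]; exact hyperfilter_le_cofinite
  have hst : Tendsto (fun n => (s n)⁻¹) (hyperfilter ℕ) (nhds β) := by
    refine Tendsto.mono_left ?_ hat
    have h1 : Tendsto (fun n : ℕ => 1 / ((n : ℝ) + 2)) atTop (nhds 0) := by
      have : Tendsto (fun n : ℕ => (n : ℝ) + 2) atTop atTop :=
        tendsto_atTop_add_const_right _ _ tendsto_natCast_atTop_atTop
      simp only [one_div]; exact this.inv_tendsto_atTop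
    have h2 : Tendsto s atTop (nhds (β⁻¹ * (1 - 0))) := (h1.const_sub 1).const_mul _
    have h3 := h2.inv₀ (by simp; positivity)
    simpa using h3
  have heq : ∀ x ∈ SigSet k u v, β * ψ x + ψ (shft u) = x 0 + ψ (shft x) := by
    intro x hx
    have h1 := (hst.mul (hψt x)).add (hψt (shft u))
    have h2 := (hψt (shft x)).const_add (x 0 : ℝ)
    refine tendsto_nhds_unique h1 (h2.congr fun n => ?_)
    exact (gg_eq D (hs0 n) (hN n) hx).symm
  have hψv : ψ v = 1 := by
    have h1 : Tendsto (fun n : ℕ => (1 : ℝ) - 1 / ((1 - s n) * GG k u v (s n))) atTop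
        (nhds (1 - 0)) := by
      refine Tendsto.const_sub 1 ?_
      have ht : Tendsto (fun n => (1 - s n) * GG k u v (s n)) atTop atTop := by
        have : Tendsto (fun n : ℕ => (1 - β⁻¹) * ((n : ℝ) + 2)) atTop atTop :=
          (tendsto_atTop_add_const_right _ _ tendsto_natCast_atTop_atTop).const_mul_atTop
            (by linarith)
        refine tendsto_atTop_mono (fun n => ?_) this
        have := hs1 n; have := hG n
        apply mul_le_mul <;> first | linarith | positivity
      simp only [one_div]; exact ht.inv_tendsto_atTop
    have h2 := h1.mono_left hat
    rw [sub_zero] at h2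
    refine tendsto_nhds_unique (hψt v) (h2.congr fun n => ?_)
    rw [gg_v D (hs0 n) ((hs1 n).trans hbi) (hN n)]
  have hk := D.hk
  have hk1 : ((k - 1 : ℕ) : ℝ) = k - 1 := by
    rw [Nat.cast_sub (by omega)]; simp
  have hinf : ∀ x ∈ SigSet k u v, phiBInf (ψ (shft u)) β x = ψ x := fun x hx =>
    phiBInf_eq_of hβ1 (fun x _ => (hψ x).1) (fun x _ => (hψ x).2) heq hx
  refine ⟨ψ (shft u), β, hψ _, hβ1, hinf _ (shft_mem D.hu), ?_⟩
  rw [hinf _ (shft_mem D.hv)]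
  have := heq v D.hv
  rw [hψv, D.v0, hk1] at this
  linarith

/-! ### Lower bound -/

lemma lower_bound (D : UV k u v) {α β : ℝ} {φ : (ℕ → ℕ) → ℝ} (H : Lin k u v α β φ) :
    β ≤ lam k u v := by
  by_contra hc
  push Not at hc
  have hβ1 := H.b1
  have hβ0 : 0 < β := by linarith
  have hN : Summable (fun m => (nWords k u v m : ℝ) * β⁻¹ ^ m) :=
    summable_nWords D (by positivity) (by rw [inv_mul_lt_iff₀ hβ0]; linarith)
  have hi0 : 0 < β⁻¹ := by positivity
  have hi1 : β⁻¹ < 1 := inv_lt_one_of_one_lt₀ hβ1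
  set E : (ℕ → ℕ) → ℝ := fun x => φ x - gg k u v β⁻¹ x with hE
  have hEb : ∀ x ∈ SigSet k u v, |E x| ≤ 1 := by
    intro x hx
    have := H.nn x hx; have := H.le1 x hx
    have := gg_nonneg (k := k) (u := u) (v := v) hi0 x; have := gg_le_one D hi0 hN x
    rw [abs_le]; constructor <;> simp only [hE] <;> linarith
  have hαu : α = φ (shft u) := by
    have := H.eq u D.hu
    rw [H.fu, D.u0] at this; simpa using this
  have hEs : ∀ x ∈ SigSet k u v, E (shft x) = β * E x + E (shft u) := by
    intro x hx
    have h1 := H.eq x hx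
    have h2 := gg_eq D hi0 hN hx
    rw [inv_inv] at h2
    simp only [hE]; rw [← hαu]; linarith
  have hEu : E u = 0 := by simp [hE, H.fu, gg_u]
  -- general: if `E (σ^n x)` grows geometrically, then it vanishes
  have grow : ∀ x ∈ SigSet k u v, ∀ c : ℝ, (∀ n, β ^ n * c ≤ |E (shft^[n] x)|) → c ≤ 0 := by
    intro x hx c h
    by_contra hc
    push Not at hc
    obtain ⟨n, hn⟩ := pow_unbounded_of_one_lt (1 / c) hβ1
    have h1 := (h n).trans (hEb _ (iter_mem hx n))
    rw [div_lt_iff₀ hc] at hn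
    linarith
  have hsu : E (shft u) = 0 := by
    have h1 : ∀ n, 0 ≤ E (shft^[n] (shft u)) * E (shft u) ∧
        β ^ n * |E (shft u)| ≤ |E (shft^[n] (shft u))| := by
      intro n
      induction n with
      | zero => simp [mul_self_nonneg]
      | succ n ih =>
        rw [Function.iterate_succ_apply', hEs _ (iter_mem (shft_mem D.hu) n)]
        generalize E (shft^[n] (shft u)) = a at *
        generalize E (shft u) = b at *
        refine ⟨by nlinarith [ih.1, mul_self_nonneg b], ?_⟩
        have e : |β * a| ≤ |β * a + b| := by
          apply sq_le_sq.1
          nlinarith [ih.1, mul_self_nonneg b, mul_nonneg hβ0.le ih.1]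
        rw [abs_mul, abs_of_pos hβ0] at e
        have := mul_le_mul_of_nonneg_left ih.2 hβ0.le
        rw [pow_succ]; linarith
    have := grow _ (shft_mem D.hu) |E (shft u)| (fun n => (h1 n).2)
    exact abs_nonpos_iff.1 this
  have hEv : E v = 0 := by
    have h1 : ∀ n, E (shft^[n] v) = β ^ n * E v := by
      intro n
      induction n with
      | zero => simp
      | succ n ih =>
        rw [Function.iterate_succ_apply', hEs _ (iter_mem D.hv n), hsu, ih, pow_succ]; ring
    have := grow _ D.hv |E v| (fun n => by
      rw [h1, abs_mul, abs_of_pos (pow_pos hβ0 n)])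
    exact abs_nonpos_iff.1 this
  have hG := GG_pos D hi0 hN
  simp only [hE, H.fv, gg_v D hi0 hi1 hN] at hEv
  have : 0 < 1 / ((1 - β⁻¹) * GG k u v β⁻¹) := by
    have : 0 < 1 - β⁻¹ := by linarith
    positivity
  linarith

end

/-! ### The two periodic orbits lemma -/

lemma lemL {α β : ℝ} (hβ : 1 < β) {x y : ℕ → ℝ} {p q : ℕ} (hp : 0 < p) (hq : 0 < q)
    (hx0 : x 0 = 0) (hy0 : y 0 = 1) (hxp : ∀ l, x (l + p) = x l) (hyq : ∀ j, y (j + q) = y j)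
    (hx : ∀ l, 0 ≤ x l ∧ x l < 1) (hy : ∀ j, 0 < y j ∧ y j ≤ 1)
    (hxe : ∀ l, ∃ a : ℤ, β * x l + α = a + x (l + 1))
    (hye : ∀ j, ∃ b : ℤ, β * y j + α = b + y (j + 1)) :
    β⁻¹ ^ p + β⁻¹ ^ q ≤ 1 := by
  classical
  have hβ0 : 0 < β := by linarith
  choose a ha using hxe
  choose b hb using hye
  have hxm : ∀ l, x (l % p) = x l := fun l => by
    have : Function.Periodic x p := hxp
    exact this.map_mod_nat l
  have hym : ∀ l, y (l % q) = y l := fun l => by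
    have : Function.Periodic y q := hyq
    exact this.map_mod_nat l
  obtain ⟨⟨l, j⟩, hmem, hmin⟩ := Finset.exists_min_image
    ((Finset.range p ×ˢ Finset.range q).filter fun r => 0 < y r.2 - x r.1)
    (fun r => y r.2 - x r.1) ⟨(0, 0), by simp [hp, hq, hx0, hy0]⟩
  simp only [Finset.mem_filter, Finset.mem_product, Finset.mem_range] at hmem hmin
  set m := y j - x l with hm
  have hm0 : 0 < m := hmem.2
  have hmin' : ∀ l' j', 0 < y j' - x l' → m ≤ y j' - x l' := by
    intro l' j' h
    have := hmin (l' % p, j' % q) ⟨⟨Nat.mod_lt _ hp, Nat.mod_lt _ hq⟩, by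
      simp only [hxm, hym]; exact h⟩
    simpa only [hxm, hym] using this
  set e : ℕ → ℤ := fun i => b (j + i) - a (l + i) with he
  have hD : ∀ i, y (j + (i + 1)) - x (l + (i + 1)) = β * (y (j + i) - x (l + i)) - e i := by
    intro i
    have h1 := ha (l + i); have h2 := hb (j + i)
    simp only [he]; push_cast
    rw [← add_assoc, ← add_assoc]; linarith
  have hDi : ∀ i, (∀ i' < i, e i' = 0) → y (j + i) - x (l + i) = β ^ i * m := by
    intro i
    induction i with
    | zero => intro _; simp [hm]
    | succ i ih =>
      intro h
      rw [hD, ih (fun i' hi' => h i' (by omega)), h i (by omega)]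
      push_cast; ring
  have hex : ∃ i, e i ≠ 0 := by
    by_contra hc
    push Not at hc
    obtain ⟨n, hn⟩ := pow_unbounded_of_one_lt (1 / m) hβ
    rw [div_lt_iff₀ hm0, ← hDi n (fun i _ => hc i)] at hn
    have := (hy (j + n)).2; have := (hx (l + n)).1
    linarith
  set i := Nat.find hex with hi
  have hi1 : e i ≠ 0 := Nat.find_spec hex
  have hi2 : ∀ i' < i, e i' = 0 := fun i' h' => by
    have := Nat.find_min hex h'; simpa using this
  have hDle : ∀ i' ≤ i, y (j + i') - x (l + i') = β ^ i' * m := fun i' h' =>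
    hDi i' (fun i'' h'' => hi2 i'' (by omega))
  have hDi1 := hD i
  rw [hDle i le_rfl] at hDi1
  have hpi : 0 < β ^ i * m := by positivity
  have hy' := hy (j + (i + 1)); have hx' := hx (l + (i + 1))
  have hpi' : 0 < β * (β ^ i * m) := by positivity
  have hei : 1 ≤ e i := by
    have h1 : (-1 : ℝ) < e i := by linarith
    have h2 : (-1 : ℤ) < e i := by exact_mod_cast h1
    omega
  have heiR : (1 : ℝ) ≤ e i := by exact_mod_cast hei
  have c1 : β ^ (i + 1) * m ≤ y (j + (i + 1)) * β ^ q := by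
    rcases le_or_gt q (i + 1) with h | h
    · have h1 := hDle (i + 1 - q) (by omega)
      have h2 := hyq (j + (i + 1 - q))
      rw [show j + (i + 1 - q) + q = j + (i + 1) by omega] at h2
      rw [h2]
      have h3 := (hx (l + (i + 1 - q))).1
      have h4 : β ^ (i + 1) = β ^ (i + 1 - q) * β ^ q := by rw [← pow_add]; congr 1; omega
      rw [h4]
      have : 0 < β ^ q := by positivity
      nlinarith
    · have h1 := hmin' 0 (j + (i + 1)) (by rw [hx0]; linarith)
      rw [hx0, sub_zero] at h1
      have h2 : β ^ (i + 1) ≤ β ^ q := pow_le_pow_right₀ hβ.le h.le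
      rw [mul_comm (y _)]
      gcongr
  have c2 : β ^ (i + 1) * m ≤ (1 - x (l + (i + 1))) * β ^ p := by
    rcases le_or_gt p (i + 1) with h | h
    · have h1 := hDle (i + 1 - p) (by omega)
      have h2 := hxp (l + (i + 1 - p))
      rw [show l + (i + 1 - p) + p = l + (i + 1) by omega] at h2
      rw [h2]
      have h3 := (hy (j + (i + 1 - p))).2
      have h4 : β ^ (i + 1) = β ^ (i + 1 - p) * β ^ p := by rw [← pow_add]; congr 1; omega
      rw [h4]
      have : 0 < β ^ p := by positivity
      nlinarith
    · have h1 := hmin' (l + (i + 1)) 0 (by rw [hy0]; linarith)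
      rw [hy0] at h1
      have h2 : β ^ (i + 1) ≤ β ^ p := pow_le_pow_right₀ hβ.le h.le
      rw [mul_comm (1 - _)]
      gcongr
  have hM : 0 < β ^ (i + 1) * m := by positivity
  set M := β ^ (i + 1) * m with hMdef
  have hM2 : β * (β ^ i * m) = M := by rw [hMdef, pow_succ]; ring
  rw [hM2] at hDi1
  have d1 : M * β⁻¹ ^ q ≤ y (j + (i + 1)) := by
    rw [inv_pow, ← div_eq_mul_inv, div_le_iff₀ (by positivity)]; exact c1
  have d2 : M * β⁻¹ ^ p ≤ 1 - x (l + (i + 1)) := by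
    rw [inv_pow, ← div_eq_mul_inv, div_le_iff₀ (by positivity)]; exact c2
  have : M * (β⁻¹ ^ p + β⁻¹ ^ q) ≤ M * 1 := by rw [mul_add]; linarith
  exact le_of_mul_le_mul_left this hM

lemma gap_sum {z : ℝ} (hz0 : 0 < z) (hz1 : z < 1) (q : ℕ) (S : Finset ℕ) :
    ∀ p, (∀ i ∈ S, p ≤ i) → (∀ i ∈ S, ∀ j ∈ S, i < j → i + q ≤ j) →
      (1 - z ^ q) * ∑ i ∈ S, z ^ i ≤ z ^ p := by
  induction S using Finset.induction_on_min with
  | empty => intro p _ _; simp; positivity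
  | insert a s h ih =>
    intro p h1 h2
    have ha : a ∉ s := fun h' => lt_irrefl _ (h a h')
    rw [Finset.sum_insert ha]
    have := ih (a + q) (fun i hi => h2 a (by simp) i (by simp [hi]) (h i hi))
      (fun i hi j hj => h2 i (by simp [hi]) j (by simp [hj]))
    have h3 : z ^ a ≤ z ^ p := pow_le_pow_of_le_one hz0.le hz1.le (h1 a (by simp))
    rw [pow_add] at this
    linarith

section
variable {k : ℕ} {u v : ℕ → ℕ}

lemma Lin.step {α β : ℝ} {φ : (ℕ → ℕ) → ℝ} (H : Lin k u v α β φ) {x : ℕ → ℕ}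
    (hx : x ∈ SigSet k u v) (i : ℕ) :
    β * φ (shft^[i] x) + α = x i + φ (shft^[i + 1] x) := by
  have := H.eq _ (iter_mem hx i)
  rw [shft_iter, add_zero, ← Function.iterate_succ_apply' shft] at this
  exact this

lemma R0_sum (D : UV k u v) {α β : ℝ} {φ : (ℕ → ℕ) → ℝ} (H : Lin k u v α β φ)
    (S : Finset ℕ) (hS : ∀ i ∈ S, 1 ≤ i ∧ φ (shft^[i] u) = 1) :
    ∑ i ∈ S, β⁻¹ ^ i ≤ 1 := by
  classical
  have hβ1 := H.b1
  have hβ0 : 0 < β := by linarith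
  have hz0 : 0 < β⁻¹ := by positivity
  have hz1 : β⁻¹ < 1 := inv_lt_one_of_one_lt₀ hβ1
  set f : ℕ → ℝ := fun i => φ (shft^[i] u) with hf
  have hf0 : f 0 = 0 := H.fu
  have hfs : ∀ i, β * f i + α = u i + f (i + 1) := fun i => H.step D.hu i
  have hfn : ∀ i, 0 ≤ f i := fun i => H.nn _ (iter_mem D.hu i)
  have hf1 : ∀ i, f i ≤ 1 := fun i => H.le1 _ (iter_mem D.hu i)
  by_cases hg : ∃ g, 1 ≤ g ∧ ∃ i, 1 ≤ i ∧ f i = 1 ∧ (f (i + g) = 0 ∨ f (i + g) = 1)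
  · have hr : ∃ i, 1 ≤ i ∧ f i = 1 := by
      obtain ⟨g, _, i, h1, h2, _⟩ := hg; exact ⟨i, h1, h2⟩
    set q := Nat.find hg with hq
    obtain ⟨hq1, i0, hi0, hfi0, hfq⟩ := Nat.find_spec hg
    rw [← hq] at hq1 hfq
    have hqm : ∀ g < q, 1 ≤ g → ∀ i, 1 ≤ i → f i = 1 → f (i + g) ≠ 0 ∧ f (i + g) ≠ 1 := by
      intro g hgq h1 i h2 h3
      have := Nat.find_min hg hgq
      constructor <;> intro h4 <;> exact this ⟨h1, i, h2, h3, by simp [h4]⟩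
    set p := Nat.find hr with hp
    obtain ⟨hp1, hfp⟩ := Nat.find_spec hr
    rw [← hp] at hp1 hfp
    have hpm : ∀ i, 1 ≤ i → f i = 1 → p ≤ i := fun i h1 h2 => Nat.find_min' hr ⟨h1, h2⟩
    have key : β⁻¹ ^ p + β⁻¹ ^ q ≤ 1 := by
      refine lemL (α := α) hβ1 (x := fun l => f (l % p)) (y := fun j => f (i0 + j % q))
        (by omega) (by omega) (by simp [hf0]) (by simp [hfi0])
        (fun l => by simp) (fun l => by simp) (fun l => ⟨hfn _, ?_⟩) (fun j => ⟨?_, hf1 _⟩) ?_ ?_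
      · refine lt_of_le_of_ne (hf1 _) fun h => ?_
        have hl : l % p < p := Nat.mod_lt _ (by omega)
        rcases Nat.eq_zero_or_pos (l % p) with h0 | h0
        · rw [h0, hf0] at h; norm_num at h
        · have := hpm _ h0 h; omega
      · refine lt_of_le_of_ne (hfn _) fun h => ?_
        have hl : j % q < q := Nat.mod_lt _ (by omega)
        rcases Nat.eq_zero_or_pos (j % q) with h0 | h0
        · rw [h0, add_zero, hfi0] at h; norm_num at h
        · exact (hqm _ hl h0 i0 hi0 hfi0).1 h.symm
      · intro l
        have hl : l % p < p := Nat.mod_lt _ (by omega)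
        have h1 := hfs (l % p)
        by_cases hlp : l % p + 1 = p
        · have h2 : (l + 1) % p = 0 := by rw [← Nat.mod_add_mod, hlp, Nat.mod_self]
          rw [hlp, hfp] at h1
          refine ⟨u (l % p) + 1, ?_⟩
          simp only [h2, hf0]; push_cast; linarith
        · have h2 : (l + 1) % p = l % p + 1 := by
            rw [← Nat.mod_add_mod, Nat.mod_eq_of_lt (by omega)]
          refine ⟨u (l % p), ?_⟩
          simp only [h2]; push_cast; linarith
      · intro j
        have hl : j % q < q := Nat.mod_lt _ (by omega)
        have h1 := hfs (i0 + j % q)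
        by_cases hlp : j % q + 1 = q
        · have h2 : (j + 1) % q = 0 := by rw [← Nat.mod_add_mod, hlp, Nat.mod_self]
          rw [add_assoc, hlp] at h1
          rcases hfq with h3 | h3
          · refine ⟨u (i0 + j % q) - 1, ?_⟩
            simp only [h2, add_zero, hfi0]; push_cast; linarith
          · refine ⟨u (i0 + j % q), ?_⟩
            simp only [h2, add_zero, hfi0]; push_cast; linarith
        · have h2 : (j + 1) % q = j % q + 1 := by
            rw [← Nat.mod_add_mod, Nat.mod_eq_of_lt (by omega)]
          refine ⟨u (i0 + j % q), ?_⟩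
          simp only [h2]; push_cast; rw [← add_assoc]; linarith
    have h1 := gap_sum hz0 hz1 q S p (fun i hi => hpm i (hS i hi).1 (hS i hi).2) (by
      intro i hi j hj hij
      by_contra hc
      have := (hqm (j - i) (by omega) (by omega) i (hS i hi).1 (hS i hi).2).2
      rw [show i + (j - i) = j by omega] at this
      exact this (hS j hj).2)
    have h2 : 0 < 1 - β⁻¹ ^ q := by
      have := pow_lt_one₀ hz0.le hz1 (show q ≠ 0 by omega)
      linarith
    have h3 : (1 - β⁻¹ ^ q) * ∑ i ∈ S, β⁻¹ ^ i ≤ (1 - β⁻¹ ^ q) * 1 := by linarith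
    exact le_of_mul_le_mul_left h3 h2
  · have hc : S.card ≤ 1 := by
      rw [Finset.card_le_one]
      by_contra hc
      push Not at hc
      obtain ⟨i, hi, j, hj, hij⟩ := hc
      wlog h : i < j generalizing i j
      · exact this j hj i hi hij.symm (by omega)
      · refine hg ⟨j - i, by omega, i, (hS i hi).1, (hS i hi).2, Or.inr ?_⟩
        rw [show i + (j - i) = j by omega]
        exact (hS j hj).2
    calc ∑ i ∈ S, β⁻¹ ^ i ≤ ∑ i ∈ S, 1 :=
          Finset.sum_le_sum fun i _ => pow_le_one₀ hz0.le hz1.le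
      _ = S.card := by simp
      _ ≤ 1 := by exact_mod_cast hc

/-- the choice of `δ` -/
lemma exists_delta (D : UV k u v) {α β : ℝ} {φ : (ℕ → ℕ) → ℝ} (H : Lin k u v α β φ)
    {ρ : ℝ} (hρ : β < ρ) :
    ∃ δ θ : ℝ, 0 < δ ∧ β * δ ≤ 1 ∧ 0 ≤ θ ∧ θ < 1 ∧ ∀ S : Finset ℕ,
      (∀ i ∈ S, 1 ≤ i ∧ 1 - β * δ ≤ φ (shft^[i] u)) → ∑ i ∈ S, ρ⁻¹ ^ i ≤ θ := by
  classical
  have hβ1 := H.b1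
  have hβ0 : 0 < β := by linarith
  have hρ1 : 1 < ρ := by linarith
  have hρ0 : 0 < ρ := by linarith
  have hz0 : 0 < ρ⁻¹ := by positivity
  have hz1 : ρ⁻¹ < 1 := inv_lt_one_of_one_lt₀ hρ1
  have hr : β / ρ < 1 := by rw [div_lt_one hρ0]; exact hρ
  set ε := (1 - β / ρ) / 2 with hε
  have hε0 : 0 < ε := by rw [hε]; linarith
  -- tail
  obtain ⟨M, hM⟩ : ∃ M : ℕ, ρ⁻¹ ^ M / (1 - ρ⁻¹) ≤ ε := by
    obtain ⟨M, hM⟩ := exists_pow_lt_of_lt_one (show 0 < ε * (1 - ρ⁻¹) by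
      apply mul_pos hε0; linarith) hz1
    exact ⟨M, by rw [div_le_iff₀ (by linarith)]; exact hM.le⟩
  -- delta
  obtain ⟨η, hη0, hη1, hη⟩ : ∃ η : ℝ, 0 < η ∧ η ≤ 1 ∧ ∀ i < M, φ (shft^[i] u) < 1 →
      φ (shft^[i] u) < 1 - η := by
    clear hM
    induction M with
    | zero => exact ⟨1, by norm_num, le_rfl, fun i hi => absurd hi (by omega)⟩
    | succ M ih =>
      obtain ⟨η, h0, h1, h⟩ := ih
      by_cases hc : φ (shft^[M] u) < 1
      · refine ⟨min η ((1 - φ (shft^[M] u)) / 2), lt_min h0 (by linarith),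
          (min_le_left _ _).trans h1, fun i hi hi1 => ?_⟩
        rcases Nat.lt_succ_iff_lt_or_eq.1 hi with h2 | rfl
        · have := h i h2 hi1
          have := min_le_left η ((1 - φ (shft^[M] u)) / 2)
          linarith
        · have := min_le_right η ((1 - φ (shft^[i] u)) / 2)
          linarith
      · refine ⟨η, h0, h1, fun i hi hi1 => ?_⟩
        rcases Nat.lt_succ_iff_lt_or_eq.1 hi with h2 | rfl
        · exact h i h2 hi1
        · exact absurd hi1 hc
  refine ⟨η / β, β / ρ + ε, by positivity, by rw [mul_div_cancel₀ _ hβ0.ne']; exact hη1,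
    by positivity, by rw [hε]; linarith, ?_⟩
  intro S hS
  rw [mul_div_cancel₀ _ hβ0.ne'] at hS
  rw [← Finset.sum_filter_add_sum_filter_not S (fun i => φ (shft^[i] u) = 1)]
  apply add_le_add
  · have h1 := R0_sum D H (S.filter fun i => φ (shft^[i] u) = 1) (fun i hi => by
      rw [Finset.mem_filter] at hi; exact ⟨(hS i hi.1).1, hi.2⟩)
    have h2 : ∑ i ∈ S.filter (fun i => φ (shft^[i] u) = 1), ρ⁻¹ ^ i ≤
        ∑ i ∈ S.filter (fun i => φ (shft^[i] u) = 1), (β / ρ) * β⁻¹ ^ i := by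
      refine Finset.sum_le_sum fun i hi => ?_
      rw [Finset.mem_filter] at hi
      have hi1 := (hS i hi.1).1
      have e : ρ⁻¹ ^ i = (β / ρ) ^ i * β⁻¹ ^ i := by
        rw [← mul_pow]; congr 1; field_simp
      rw [e]
      have : (β / ρ) ^ i ≤ β / ρ := by
        calc (β / ρ) ^ i ≤ (β / ρ) ^ 1 := pow_le_pow_of_le_one (by positivity) hr.le hi1
          _ = _ := pow_one _
      gcongr
    rw [← Finset.mul_sum] at h2
    refine h2.trans ?_
    have : 0 < β / ρ := by positivity
    nlinarith
  · have h1 := gap_sum hz0 hz1 1 (S.filter fun i => ¬ φ (shft^[i] u) = 1) M (fun i hi => by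
      rw [Finset.mem_filter] at hi
      by_contra hc
      have h2 := hη i (by omega) (lt_of_le_of_ne (H.le1 _ (iter_mem D.hu i)) hi.2)
      have := (hS i hi.1).2
      linarith) (fun i _ j _ h => h)
    rw [pow_one] at h1
    refine le_trans ?_ hM
    rw [le_div_iff₀ (by linarith)]; linarith

end

/-! ### Upper bound -/

section
variable {k : ℕ} {u v : ℕ → ℕ} {α β : ℝ} {φ : (ℕ → ℕ) → ℝ}

lemma Lin.iter_diff (H : Lin k u v α β φ) {x y : ℕ → ℕ} (hx : x ∈ SigSet k u v)
    (hy : y ∈ SigSet k u v) (m : ℕ) (h : trunc m x = trunc m y) :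
    φ (shft^[m] y) - φ (shft^[m] x) = β ^ m * (φ y - φ x) := by
  rw [trunc_eq_iff] at h
  induction m with
  | zero => simp
  | succ m ih =>
    have h1 := H.step hx m
    have h2 := H.step hy m
    have h3 := ih (fun i hi => h i (by omega))
    rw [h m (by omega)] at h1
    rw [pow_succ]
    have : φ (shft^[m + 1] y) - φ (shft^[m + 1] x) =
      β * (φ (shft^[m] y) - φ (shft^[m] x)) := by linarith
    rw [this, h3]; ring

lemma Lin.mono (H : Lin k u v α β φ) {x y : ℕ → ℕ} (hx : x ∈ SigSet k u v)
    (hy : y ∈ SigSet k u v) (h : lexLe x y) : φ x ≤ φ y := by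
  rcases h with rfl | ⟨m, hm, h⟩
  · exact le_rfl
  · have h0 := H.iter_diff hx hy m (trunc_eq_iff.2 hm)
    have h1 := H.step hx m
    have h2 := H.step hy m
    have h3 := H.le1 _ (iter_mem hx (m + 1))
    have h4 := H.nn _ (iter_mem hy (m + 1))
    have h5 : (x m : ℝ) + 1 ≤ y m := by exact_mod_cast h
    have hb := H.b1
    have h6 : 0 ≤ β * (φ (shft^[m] y) - φ (shft^[m] x)) := by linarith
    rw [h0] at h6
    have h7 : 0 < β * β ^ m := by positivity
    rw [← mul_assoc] at h6
    have := nonneg_of_mul_nonneg_right h6 h7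
    linarith

/-- the cylinder of the first `m` letters of `w` has a big image under `σ^m` -/
def Big (k : ℕ) (u v : ℕ → ℕ) (φ : (ℕ → ℕ) → ℝ) (δ : ℝ) (m : ℕ) (w : ℕ → ℕ) : Prop :=
  ∃ y ∈ SigSet k u v, ∃ y' ∈ SigSet k u v, trunc m y = trunc m w ∧ trunc m y' = trunc m w ∧
    δ ≤ φ (shft^[m] y') - φ (shft^[m] y)

lemma big_congr {δ : ℝ} {m : ℕ} {w w' : ℕ → ℕ} (h : trunc m w = trunc m w')
    (hb : Big k u v φ δ m w) : Big k u v φ δ m w' := by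
  obtain ⟨y, hy, y', hy', h1, h2, h3⟩ := hb
  exact ⟨y, hy, y', hy', h1.trans h, h2.trans h, h3⟩

def BB (k : ℕ) (u v : ℕ → ℕ) (φ : (ℕ → ℕ) → ℝ) (δ : ℝ) (m : ℕ) : Set (ℕ → ℕ) :=
  trunc m '' {x | x ∈ SigSet k u v ∧ Big k u v φ δ m x}

lemma BB_finite {δ : ℝ} (m : ℕ) : (BB k u v φ δ m).Finite :=
  (LL_finite (k := k) (u := u) (v := v) m).subset (Set.image_mono fun _ h => h.1)

lemma BB_card (H : Lin k u v α β φ) {δ : ℝ} (hδ : 0 < δ) (m : ℕ) :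
    ((BB k u v φ δ m).ncard : ℝ) ≤ β ^ m / δ := by
  classical
  have hb := H.b1
  have hβ0 : 0 < β := by linarith
  have hpm : 0 < β ^ m := by positivity
  set T := (BB_finite (k := k) (u := u) (v := v) (φ := φ) (δ := δ) m).toFinset with hT
  have hTc : (BB k u v φ δ m).ncard = T.card := Set.ncard_eq_toFinset_card _ _
  have hch : ∀ w : ℕ → ℕ, ∃ y y', w ∈ T → y ∈ SigSet k u v ∧ y' ∈ SigSet k u v ∧
      trunc m y = w ∧ trunc m y' = w ∧ δ / β ^ m ≤ φ y' - φ y := by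
    intro w
    by_cases hw : w ∈ T
    · rw [hT, Set.Finite.mem_toFinset] at hw
      obtain ⟨x, ⟨hx, y, hy, y', hy', h1, h2, h3⟩, rfl⟩ := hw
      refine ⟨y, y', fun _ => ⟨hy, hy', h1, h2, ?_⟩⟩
      rw [H.iter_diff hy hy' m (h1.trans h2.symm)] at h3
      rw [div_le_iff₀ hpm]; linarith
    · exact ⟨w, w, fun h => absurd h hw⟩
  choose a b hab using hch
  have key : ∀ w ∈ T, ∀ w' ∈ T, lexLt w w' → φ (b w) ≤ φ (a w') := by
    intro w hw w' hw' h
    obtain ⟨_, h1, _, h2, _⟩ := hab w hw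
    obtain ⟨h3, _, h4, _, _⟩ := hab w' hw'
    refine H.mono h1 h3 (Or.inr (lexLt_of_trunc (n := m) ?_))
    rw [h2, h4]; exact h
  have hdisj : Set.PairwiseDisjoint (T : Set (ℕ → ℕ)) fun w => Set.Ioo (φ (a w)) (φ (b w)) := by
    intro w hw w' hw' hne
    rw [Function.onFun, Set.disjoint_left]
    rintro t ⟨h1, h2⟩ ⟨h3, h4⟩
    rcases lexLt_trichotomy w w' with h | h | h
    · have := key w hw w' hw' h; linarith
    · exact hne h
    · have := key w' hw' w hw h; linarith
  have hm := MeasureTheory.measure_biUnion_finset (μ := MeasureTheory.volume) hdisj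
    (fun w _ => measurableSet_Ioo)
  have hle : MeasureTheory.volume (⋃ w ∈ T, Set.Ioo (φ (a w)) (φ (b w))) ≤
      MeasureTheory.volume (Set.Icc (0 : ℝ) 1) := by
    refine MeasureTheory.measure_mono ?_
    refine Set.iUnion₂_subset fun w hw t ht => ?_
    obtain ⟨h1, h2, _⟩ := hab w hw
    exact ⟨(H.nn _ h1).trans ht.1.le, ht.2.le.trans (H.le1 _ h2)⟩
  rw [hm] at hle
  simp only [Real.volume_Ioo, Real.volume_Icc, sub_zero] at hle
  rw [← ENNReal.ofReal_sum_of_nonneg (fun w hw => ?_)] at hle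
  · rw [ENNReal.ofReal_le_ofReal_iff (by norm_num)] at hle
    have h2 : ∑ w ∈ T, δ / β ^ m ≤ ∑ w ∈ T, (φ (b w) - φ (a w)) :=
      Finset.sum_le_sum fun w hw => (hab w hw).2.2.2.2
    rw [Finset.sum_const, nsmul_eq_mul] at h2
    have h3 := h2.trans hle
    rw [hTc, le_div_iff₀ hδ]
    rw [← mul_div_assoc, div_le_iff₀ hpm] at h3
    linarith
  · have := (hab w hw).2.2.2.2
    have : 0 < δ / β ^ m := by positivity
    linarith

/-- words of length `m+n` starting with the first `m` letters of `w`, without big prefixes -/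
def Tn (k : ℕ) (u v : ℕ → ℕ) (φ : (ℕ → ℕ) → ℝ) (δ : ℝ) (w : ℕ → ℕ) (m n : ℕ) :
    Set (ℕ → ℕ) :=
  trunc (m + n) '' {y | y ∈ SigSet k u v ∧ trunc m y = trunc m w ∧
    ∀ j < n, ¬ Big k u v φ δ (m + j) y}

lemma Tn_finite {δ : ℝ} (w : ℕ → ℕ) (m n : ℕ) : (Tn k u v φ δ w m n).Finite :=
  (LL_finite (k := k) (u := u) (v := v) (m + n)).subset (Set.image_mono fun _ h => h.1)

lemma shft_iter_lt {x y : ℕ → ℕ} {n a : ℕ} (hn : n ≤ a) (h : ∀ i < a, x i = y i)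
    (ha : x a < y a) : lexLt (shft^[n] x) (shft^[n] y) := by
  refine ⟨a - n, fun i hi => ?_, ?_⟩
  · rw [shft_iter, shft_iter]; exact h _ (by omega)
  · rw [shft_iter, shft_iter, show n + (a - n) = a by omega]; exact ha

lemma shft_wcat {m : ℕ} {w y : ℕ → ℕ} (i : ℕ) : shft^[m + i] (wcat m w y) = shft^[i] y := by
  funext t
  rw [shft_iter, shft_iter, wcat, if_neg (by omega)]
  congr 1; omega

/-- replacing the tail by `u` after an increased letter -/
lemma wcat_mem (D : UV k u v) {y0 y : ℕ → ℕ} (h0 : y0 ∈ SigSet k u v) (hy : y ∈ SigSet k u v)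
    {a : ℕ} (h : ∀ i < a, y0 i = y i) (ha : y0 a < y a) : wcat (a + 1) y u ∈ SigSet k u v := by
  have hlt : ∀ i < a + 1, wcat (a + 1) y u i = y i := fun i hi => by simp [wcat, hi]
  refine ⟨fun i => ?_, fun n => ?_⟩
  · unfold wcat; split_ifs
    · exact hy.1 i
    · exact D.hu.1 _
  · rcases le_or_gt n a with hn | hn
    · constructor
      · refine lexLe_trans (h0.2 n).1 (Or.inr (shft_iter_lt hn (fun i hi => ?_) ?_))
        · rw [hlt i (by omega)]; exact h i hi
        · rw [hlt a (by omega)]; exact ha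
      · refine lexLe_trans ?_ (hy.2 n).2
        rcases (hy.2 (a + 1)).1 with he | ⟨t, ht, ht'⟩
        · left
          funext i
          rw [shft_iter, shft_iter]
          by_cases hi : n + i < a + 1
          · exact hlt _ hi
          · rw [wcat, if_neg hi]
            rw [he, shft_iter]; congr 1; omega
        · right
          refine shft_iter_lt (a := a + 1 + t) (by omega) (fun i hi => ?_) ?_
          · by_cases hi' : i < a + 1
            · exact hlt _ hi'
            · rw [wcat, if_neg hi', ht _ (by omega), shft_iter]; congr 1; omega
          · rw [wcat, if_neg (by omega), show a + 1 + t - (a + 1) = t by omega]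
            rwa [shft_iter] at ht'
    · rw [show n = (a + 1) + (n - (a + 1)) by omega, shft_wcat]
      exact D.hu.2 _

def bump (y0 : ℕ → ℕ) (a : ℕ) : ℕ → ℕ := fun t => if t = a then y0 t + 1 else y0 t

lemma wcat_congr {m : ℕ} {w w' y : ℕ → ℕ} (h : ∀ i < m, w i = w' i) :
    wcat m w y = wcat m w' y := by
  funext i
  unfold wcat
  split_ifs with hi
  · exact h i hi
  · rfl

open Classical in
lemma Tn_split (D : UV k u v) (H : Lin k u v α β φ) {δ : ℝ} (hβδ : β * δ ≤ 1)
    {w y0 : ℕ → ℕ} {m n : ℕ} (h0 : y0 ∈ SigSet k u v) (h0w : trunc m y0 = trunc m w)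
    (hmin : ∀ y ∈ Tn k u v φ δ w m n, ¬ lexLt y (trunc (m + n) y0)) :
    (Tn k u v φ δ w m n).ncard ≤ 1 + ∑ i ∈ (Finset.Icc 1 n).filter (fun i =>
      1 - β * δ ≤ φ (shft^[m + i] y0) ∧ wcat (m + i) (bump y0 (m + i - 1)) u ∈ SigSet k u v),
      (Tn k u v φ δ (bump y0 (m + i - 1)) (m + i) (n - i)).ncard := by
  set S := (Finset.Icc 1 n).filter (fun i =>
      1 - β * δ ≤ φ (shft^[m + i] y0) ∧ wcat (m + i) (bump y0 (m + i - 1)) u ∈ SigSet k u v)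
    with hS
  have hsub : Tn k u v φ δ w m n ⊆ {trunc (m + n) y0} ∪
      ⋃ i ∈ S, Tn k u v φ δ (bump y0 (m + i - 1)) (m + i) (n - i) := by
    rintro z hz
    have hz' := hmin z hz
    obtain ⟨y, ⟨hy, hyw, hyb⟩, rfl⟩ := hz
    rcases lexLt_trichotomy (trunc (m + n) y) (trunc (m + n) y0) with h | h | h
    · exact absurd h hz'
    · exact Or.inl h
    · right
      obtain ⟨a, ha, ha'⟩ := h
      have han : a < m + n := by
        by_contra hc
        simp [trunc, hc] at ha'
      have ha1 : ∀ i < a, y0 i = y i := fun i hi => by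
        have := ha i hi
        simpa [trunc, hi.trans han] using this
      have ha2 : y0 a < y a := by simpa [trunc, han] using ha'
      have ham : m ≤ a := by
        by_contra hc
        push Not at hc
        have := trunc_eq_iff.1 (h0w.trans hyw.symm) a hc
        omega
      have hnb := hyb (a - m) (by omega)
      rw [show m + (a - m) = a by omega] at hnb
      have hd : φ (shft^[a] y) - φ (shft^[a] y0) < δ := by
        by_contra hc
        push Not at hc
        exact hnb ⟨y0, h0, y, hy, trunc_eq_iff.2 ha1, rfl, hc⟩
      have hb := H.b1
      have hβ0 : 0 < β := by linarith
      have h1 := H.step hy a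
      have h2 := H.step h0 a
      have h3 : (y0 a : ℝ) + 1 ≤ y a := by exact_mod_cast ha2
      have h4 := H.nn _ (iter_mem hy (a + 1))
      have h5 := H.le1 _ (iter_mem h0 (a + 1))
      have h6 : β * (φ (shft^[a] y) - φ (shft^[a] y0)) < β * δ := by gcongr
      have h7 : (y a : ℝ) < y0 a + 2 := by linarith
      have h8 : y a < y0 a + 2 := by exact_mod_cast h7
      have h9 : y a = y0 a + 1 := by omega
      have h10 : 1 - β * δ ≤ φ (shft^[a + 1] y0) := by linarith
      have hbump : ∀ i < a + 1, y i = bump y0 a i := by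
        intro i hi
        unfold bump
        split_ifs with hia
        · rw [hia, h9]
        · exact (ha1 i (by omega)).symm
      simp only [Set.mem_iUnion]
      have e1 : m + (a - m + 1) - 1 = a := by omega
      have e2 : m + (a - m + 1) = a + 1 := by omega
      refine ⟨a - m + 1, ?_, ?_⟩
      · rw [hS, Finset.mem_filter, e1, e2, ← wcat_congr hbump]
        refine ⟨?_, h10, wcat_mem D h0 hy ha1 ha2⟩
        rw [Finset.mem_Icc]; omega
      · rw [e1, e2]
        refine ⟨y, ⟨hy, trunc_eq_iff.2 hbump, fun j hj => ?_⟩, ?_⟩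
        · have := hyb (a - m + 1 + j) (by omega)
          rwa [show m + (a - m + 1 + j) = a + 1 + j by omega] at this
        · congr 1; omega
  have hfin : (⋃ i ∈ S, Tn k u v φ δ (bump y0 (m + i - 1)) (m + i) (n - i)).Finite :=
    Set.Finite.biUnion S.finite_toSet fun i _ => Tn_finite _ _ _
  calc (Tn k u v φ δ w m n).ncard ≤ _ :=
        Set.ncard_le_ncard hsub ((Set.finite_singleton _).union hfin)
    _ ≤ _ := Set.ncard_union_le _ _
    _ ≤ _ := by
      rw [Set.ncard_singleton]
      gcongr
      exact Finset.set_ncard_biUnion_le _ _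

lemma Tn_E0 (D : UV k u v) (H : Lin k u v α β φ) {δ θ ρ : ℝ} (hβδ : β * δ ≤ 1)
    (hρ : 1 < ρ) (hθ1 : θ < 1)
    (hsum : ∀ S : Finset ℕ,
      (∀ i ∈ S, 1 ≤ i ∧ 1 - β * δ ≤ φ (shft^[i] u)) → ∑ i ∈ S, ρ⁻¹ ^ i ≤ θ) (n : ℕ) :
    ∀ (m : ℕ) (w : ℕ → ℕ), wcat m w u ∈ SigSet k u v →
      ((Tn k u v φ δ w m n).ncard : ℝ) ≤ (1 - θ)⁻¹ * ρ ^ n := by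
  classical
  induction n using Nat.strong_induction_on with
  | _ n ih =>
    intro m w hw
    have hw' : trunc m (wcat m w u) = trunc m w :=
      trunc_eq_iff.2 fun i hi => by simp [wcat, hi]
    have h1 := Tn_split (n := n) D H hβδ hw hw' (by
      rintro _ ⟨y, ⟨hy, hyw, _⟩, rfl⟩ hlt
      have h2 := lexLt_of_trunc hlt
      obtain ⟨a, ha, ha'⟩ := h2
      have ham : m ≤ a := by
        by_contra hc
        push Not at hc
        have := trunc_eq_iff.1 hyw a hc
        simp [wcat, hc, this] at ha'
      have h3 := shft_iter_lt ham ha ha'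
      have h4 := shft_wcat (m := m) (w := w) (y := u) 0
      simp only [add_zero, Function.iterate_zero, id] at h4
      rw [h4] at h3
      exact lexLe_iff_not_lt.1 (hy.2 m).1 h3)
    set S := (Finset.Icc 1 n).filter (fun i =>
      1 - β * δ ≤ φ (shft^[m + i] (wcat m w u)) ∧
        wcat (m + i) (bump (wcat m w u) (m + i - 1)) u ∈ SigSet k u v) with hS
    have hSm : ∀ i ∈ S, (1 ≤ i ∧ i ≤ n) ∧ 1 - β * δ ≤ φ (shft^[i] u) ∧
        wcat (m + i) (bump (wcat m w u) (m + i - 1)) u ∈ SigSet k u v := by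
      intro i hi
      rw [hS, Finset.mem_filter, Finset.mem_Icc, shft_wcat] at hi
      exact hi
    have hK : 0 < (1 - θ)⁻¹ := inv_pos.2 (by linarith)
    have hρn : 1 ≤ ρ ^ n := one_le_pow₀ hρ.le
    have h2 : ∑ i ∈ S, ((Tn k u v φ δ (bump (wcat m w u) (m + i - 1)) (m + i) (n - i)).ncard : ℝ)
        ≤ ∑ i ∈ S, (1 - θ)⁻¹ * ρ ^ n * ρ⁻¹ ^ i := by
      refine Finset.sum_le_sum fun i hi => ?_
      obtain ⟨⟨hi1, hi2⟩, _, hi3⟩ := hSm i hi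
      refine (ih (n - i) (by omega) _ _ hi3).trans (le_of_eq ?_)
      rw [mul_assoc]; congr 1
      rw [inv_pow, ← div_eq_mul_inv, eq_div_iff (by positivity), ← pow_add]
      congr 1; omega
    rw [← Finset.mul_sum] at h2
    have h3 := hsum S (fun i hi => ⟨(hSm i hi).1.1, (hSm i hi).2.1⟩)
    have h4 : ((Tn k u v φ δ w m n).ncard : ℝ) ≤ 1 + ∑ i ∈ S,
      ((Tn k u v φ δ (bump (wcat m w u) (m + i - 1)) (m + i) (n - i)).ncard : ℝ) := by
      exact_mod_cast h1
    have h5 : (1 - θ)⁻¹ * ρ ^ n * ∑ i ∈ S, ρ⁻¹ ^ i ≤ (1 - θ)⁻¹ * ρ ^ n * θ := by gcongr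
    have h6 : (1 - θ)⁻¹ * ρ ^ n = ρ ^ n + (1 - θ)⁻¹ * ρ ^ n * θ := by
      have : 1 - θ ≠ 0 := by linarith
      field_simp; ring
    linarith

lemma exists_lexmin (T : Finset (ℕ → ℕ)) (hT : T.Nonempty) :
    ∃ t ∈ T, ∀ s ∈ T, lexLe t s := by
  classical
  induction hT using Finset.Nonempty.cons_induction with
  | singleton a => exact ⟨a, by simp, fun s hs => by
      rw [Finset.mem_singleton] at hs; rw [hs]; exact lexLe_refl _⟩
  | cons a s ha hs ih =>
    obtain ⟨t, ht, hts⟩ := ih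
    by_cases h : lexLe a t
    · refine ⟨a, by simp, fun r hr => ?_⟩
      rcases Finset.mem_cons.1 hr with rfl | hr
      · exact lexLe_refl _
      · exact lexLe_trans h (hts r hr)
    · rw [lexLe_iff_not_lt, not_not] at h
      refine ⟨t, by simp [ht], fun r hr => ?_⟩
      rcases Finset.mem_cons.1 hr with rfl | hr
      · exact Or.inr h
      · exact hts r hr

lemma Tn_gen (D : UV k u v) (H : Lin k u v α β φ) {δ θ ρ : ℝ} (hβδ : β * δ ≤ 1)
    (hρ : 1 < ρ) (hθ1 : θ < 1)
    (hsum : ∀ S : Finset ℕ,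
      (∀ i ∈ S, 1 ≤ i ∧ 1 - β * δ ≤ φ (shft^[i] u)) → ∑ i ∈ S, ρ⁻¹ ^ i ≤ θ) (n : ℕ)
    (m : ℕ) (w : ℕ → ℕ) :
    ((Tn k u v φ δ w m n).ncard : ℝ) ≤ (1 + (1 - θ)⁻¹ * (1 - ρ⁻¹)⁻¹) * ρ ^ n := by
  classical
  have hz0 : 0 < ρ⁻¹ := by positivity
  have hz1 : ρ⁻¹ < 1 := inv_lt_one_of_one_lt₀ hρ
  have hK : 0 < (1 - θ)⁻¹ := inv_pos.2 (by linarith)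
  have hK2 : 0 < (1 - ρ⁻¹)⁻¹ := inv_pos.2 (by linarith)
  have hρn : 1 ≤ ρ ^ n := one_le_pow₀ hρ.le
  rcases (Tn k u v φ δ w m n).eq_empty_or_nonempty with he | hne
  · rw [he, Set.ncard_empty]; push_cast; positivity
  · obtain ⟨t, ht, hts⟩ := exists_lexmin
      (Tn_finite (k := k) (u := u) (v := v) (φ := φ) (δ := δ) w m n).toFinset (by simpa using hne)
    rw [Set.Finite.mem_toFinset] at ht
    obtain ⟨y0, ⟨hy0, hyw, _⟩, rfl⟩ := ht
    have h1 := Tn_split (n := n) D H hβδ hy0 hyw (fun y hy =>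
      lexLe_iff_not_lt.1 (hts y (by rwa [Set.Finite.mem_toFinset])))
    set S := (Finset.Icc 1 n).filter (fun i =>
      1 - β * δ ≤ φ (shft^[m + i] y0) ∧
        wcat (m + i) (bump y0 (m + i - 1)) u ∈ SigSet k u v) with hS
    have hSm : ∀ i ∈ S, (1 ≤ i ∧ i ≤ n) ∧
        wcat (m + i) (bump y0 (m + i - 1)) u ∈ SigSet k u v := by
      intro i hi
      rw [hS, Finset.mem_filter, Finset.mem_Icc] at hi
      exact ⟨hi.1, hi.2.2⟩
    have h2 : ∑ i ∈ S, ((Tn k u v φ δ (bump y0 (m + i - 1)) (m + i) (n - i)).ncard : ℝ)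
        ≤ ∑ i ∈ S, (1 - θ)⁻¹ * ρ ^ n * ρ⁻¹ ^ i := by
      refine Finset.sum_le_sum fun i hi => ?_
      obtain ⟨⟨hi1, hi2⟩, hi3⟩ := hSm i hi
      refine (Tn_E0 D H hβδ hρ hθ1 hsum (n - i) _ _ hi3).trans (le_of_eq ?_)
      rw [mul_assoc]; congr 1
      rw [inv_pow, ← div_eq_mul_inv, eq_div_iff (by positivity), ← pow_add]
      congr 1; omega
    rw [← Finset.mul_sum] at h2
    have h3 := gap_sum hz0 hz1 1 S 0 (fun i _ => Nat.zero_le i) (fun i _ j _ h => h)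
    rw [pow_one, pow_zero] at h3
    have h3' : ∑ i ∈ S, ρ⁻¹ ^ i ≤ (1 - ρ⁻¹)⁻¹ := by
      rw [← one_div (1 - ρ⁻¹), le_div_iff₀ (by linarith)]; linarith
    have h4 : ((Tn k u v φ δ w m n).ncard : ℝ) ≤ 1 + ∑ i ∈ S,
      ((Tn k u v φ δ (bump y0 (m + i - 1)) (m + i) (n - i)).ncard : ℝ) := by
      exact_mod_cast h1
    have h5 : (1 - θ)⁻¹ * ρ ^ n * ∑ i ∈ S, ρ⁻¹ ^ i ≤ (1 - θ)⁻¹ * ρ ^ n * (1 - ρ⁻¹)⁻¹ := by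
      gcongr
    have h6 : (1 + (1 - θ)⁻¹ * (1 - ρ⁻¹)⁻¹) * ρ ^ n =
      ρ ^ n + (1 - θ)⁻¹ * ρ ^ n * (1 - ρ⁻¹)⁻¹ := by ring
    linarith

def BS (k : ℕ) (u v : ℕ → ℕ) (φ : (ℕ → ℕ) → ℝ) (δ : ℝ) (m : ℕ) : Set (ℕ → ℕ) :=
  trunc (m + 1) '' {x | x ∈ SigSet k u v ∧ Big k u v φ δ m x}

lemma BS_finite {δ : ℝ} (m : ℕ) : (BS k u v φ δ m).Finite :=
  (LL_finite (k := k) (u := u) (v := v) (m + 1)).subset (Set.image_mono fun _ h => h.1)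

lemma BS_card {δ : ℝ} (m : ℕ) :
    (BS k u v φ δ m).ncard ≤ (BB k u v φ δ m).ncard * k := by
  have hk : (Set.Iio k).ncard = k := by
    rw [← Finset.coe_Iio, Set.ncard_coe_finset]; simp
  have e : (BB k u v φ δ m).ncard * k = (BB k u v φ δ m ×ˢ Set.Iio k).ncard := by
    rw [Set.ncard_prod, hk]
  rw [e]
  refine Set.ncard_le_ncard_of_injOn (fun w => (trunc m w, w m)) ?_ ?_
    ((BB_finite m).prod (Set.finite_Iio k))
  · rintro _ ⟨x, hx, rfl⟩
    refine ⟨⟨x, hx, ?_⟩, ?_⟩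
    · rw [trunc_eq_iff]; intro i hi; simp [trunc]; intro h; omega
    · simp only [trunc, Set.mem_Iio]; rw [if_pos (by omega)]; exact hx.1.1 m
  · rintro _ ⟨x, hx, rfl⟩ _ ⟨y, hy, rfl⟩ h
    simp only [Prod.mk.injEq, trunc_eq_iff] at h
    rw [trunc_eq_iff]
    intro i hi
    rcases Nat.lt_succ_iff_lt_or_eq.1 hi with h' | rfl
    · have := h.1 i h'
      simpa [trunc, hi] using this
    · have := h.2
      simpa [trunc] using this

lemma upper_count (D : UV k u v) (H : Lin k u v α β φ) {ρ : ℝ} (hρ : β < ρ) :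
    ∃ C : ℝ, ∀ n, (nWords k u v n : ℝ) ≤ C * (n + 1) * ρ ^ n := by
  classical
  obtain ⟨δ, θ, hδ, hβδ, hθ0, hθ1, hsum⟩ := exists_delta D H hρ
  have hβ1 := H.b1
  have hβ0 : 0 < β := by linarith
  have hρ1 : 1 < ρ := by linarith
  have hδ1 : δ ≤ 1 := by nlinarith
  have hT := Tn_gen D H hβδ hρ1 hθ1 hsum
  have hz1 : ρ⁻¹ < 1 := inv_lt_one_of_one_lt₀ hρ1
  have hK : 0 < (1 - θ)⁻¹ := inv_pos.2 (by linarith)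
  have hK2 : 0 < (1 - ρ⁻¹)⁻¹ := inv_pos.2 (by linarith)
  obtain ⟨C, hC⟩ : ∃ C : ℝ, C = 1 + (1 - θ)⁻¹ * (1 - ρ⁻¹)⁻¹ := ⟨_, rfl⟩
  rw [← hC] at hT
  have hC1 : 0 < C := by rw [hC]; positivity
  refine ⟨1 / δ + k / δ * C, fun n => ?_⟩
  have hsub : LL k u v n ⊆ BB k u v φ δ n ∪ ⋃ m ∈ Finset.range n,
      ⋃ t ∈ (BS_finite (k := k) (u := u) (v := v) (φ := φ) (δ := δ) m).toFinset,
        Tn k u v φ δ t (m + 1) (n - (m + 1)) := by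
    rintro _ ⟨x, hx, rfl⟩
    have hb0 : Big k u v φ δ 0 x :=
      ⟨u, D.hu, v, D.hv, by simp [trunc_zero], by simp [trunc_zero], by
        simp [H.fu, H.fv]; exact hδ1⟩
    set m := Nat.findGreatest (fun m => Big k u v φ δ m x) n with hm
    have hmb : Big k u v φ δ m x := Nat.findGreatest_spec (P := fun m => Big k u v φ δ m x)
      (Nat.zero_le n) hb0
    have hmn : m ≤ n := Nat.findGreatest_le n
    rcases Nat.eq_or_lt_of_le hmn with he | hlt
    · left
      rw [he] at hmb
      exact ⟨x, ⟨hx, hmb⟩, rfl⟩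
    · right
      simp only [Set.mem_iUnion]
      refine ⟨m, Finset.mem_range.2 hlt, trunc (m + 1) x, ?_, x, ⟨hx, ?_, fun j hj => ?_⟩, ?_⟩
      · rw [Set.Finite.mem_toFinset]; exact ⟨x, ⟨hx, hmb⟩, rfl⟩
      · rw [trunc_eq_iff]; intro i hi; simp [trunc, hi]
      · exact Nat.findGreatest_is_greatest (P := fun m => Big k u v φ δ m x) (n := n)
          (by omega) (by omega)
      · congr 1; omega
  have hfin : (⋃ m ∈ Finset.range n,
      ⋃ t ∈ (BS_finite (k := k) (u := u) (v := v) (φ := φ) (δ := δ) m).toFinset,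
        Tn k u v φ δ t (m + 1) (n - (m + 1))).Finite :=
    Set.Finite.biUnion (Finset.finite_toSet _) fun m _ =>
      Set.Finite.biUnion (Finset.finite_toSet _) fun t _ => Tn_finite _ _ _
  have h1 : nWords k u v n ≤ (BB k u v φ δ n).ncard + ∑ m ∈ Finset.range n,
      ∑ t ∈ (BS_finite (k := k) (u := u) (v := v) (φ := φ) (δ := δ) m).toFinset,
        (Tn k u v φ δ t (m + 1) (n - (m + 1))).ncard := by
    rw [nWords_eq]
    calc (LL k u v n).ncard ≤ _ := Set.ncard_le_ncard hsub ((BB_finite n).union hfin)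
      _ ≤ _ := Set.ncard_union_le _ _
      _ ≤ _ := by
        gcongr
        refine (Finset.set_ncard_biUnion_le _ _).trans (Finset.sum_le_sum fun m _ => ?_)
        exact Finset.set_ncard_biUnion_le _ _
  have h2 : (nWords k u v n : ℝ) ≤ ((BB k u v φ δ n).ncard : ℝ) + ∑ m ∈ Finset.range n,
      ∑ t ∈ (BS_finite (k := k) (u := u) (v := v) (φ := φ) (δ := δ) m).toFinset,
        ((Tn k u v φ δ t (m + 1) (n - (m + 1))).ncard : ℝ) := by exact_mod_cast h1
  have h3 : ∀ m ∈ Finset.range n,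
      ∑ t ∈ (BS_finite (k := k) (u := u) (v := v) (φ := φ) (δ := δ) m).toFinset,
        ((Tn k u v φ δ t (m + 1) (n - (m + 1))).ncard : ℝ) ≤ k / δ * C * ρ ^ n := by
    intro m hm
    rw [Finset.mem_range] at hm
    refine (Finset.sum_le_card_nsmul _ _ (C * ρ ^ (n - (m + 1))) fun t _ => hT _ _ _).trans ?_
    rw [nsmul_eq_mul, ← Set.ncard_eq_toFinset_card _ (BS_finite m)]
    have g1 : ((BS k u v φ δ m).ncard : ℝ) ≤ (BB k u v φ δ m).ncard * k := by
      exact_mod_cast BS_card m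
    have g2 := BB_card H hδ m
    have g3 : β ^ m ≤ ρ ^ m := by gcongr
    have g4 : ρ ^ m * ρ ^ (n - (m + 1)) ≤ ρ ^ n := by
      rw [← pow_add]; exact pow_le_pow_right₀ hρ1.le (by omega)
    calc ((BS k u v φ δ m).ncard : ℝ) * (C * ρ ^ (n - (m + 1)))
        ≤ (ρ ^ m / δ * k) * (C * ρ ^ (n - (m + 1))) := by
          gcongr
          refine g1.trans ?_
          gcongr
          refine g2.trans ?_
          gcongr
      _ = k / δ * C * (ρ ^ m * ρ ^ (n - (m + 1))) := by ring
      _ ≤ _ := by gcongr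
  have h4 := Finset.sum_le_card_nsmul _ _ _ h3
  rw [Finset.card_range, nsmul_eq_mul] at h4
  have h5 : ((BB k u v φ δ n).ncard : ℝ) ≤ 1 / δ * ρ ^ n := by
    refine (BB_card H hδ n).trans ?_
    rw [div_eq_mul_one_div, mul_comm]
    gcongr
  have h6 : 0 ≤ 1 / δ * n * ρ ^ n := by positivity
  have h7 : 0 ≤ k / δ * C * ρ ^ n := by positivity
  have : (1 / δ + k / δ * C) * (n + 1) * ρ ^ n = 1 / δ * ρ ^ n + n * (k / δ * C * ρ ^ n) +
    1 / δ * n * ρ ^ n + k / δ * C * ρ ^ n := by ring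
  linarith

lemma upper_bound (D : UV k u v) (H : Lin k u v α β φ) : lam k u v ≤ β := by
  refine le_of_forall_gt_imp_ge_of_dense fun ρ hρ => ?_
  obtain ⟨C, hC⟩ := upper_count D H hρ
  have := H.b1
  exact lam_le_of D (by linarith) hC

end

/-- **Computation of the topological entropy of `Σ(u,v)`.** Let `k ≥ 2` and let
`u, v ∈ A^ℕ` satisfy `u₀ = 0`, `v₀ = k−1`, `u ≼ σⁿu ≼ v` and `u ≼ σⁿv ≼ v` for all
`n ≥ 0`; if `k = 2` assume additionally `σu ≼ σv`. Then: (a) if `h(Σ(u,v)) > 0`, there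
exist `α ∈ [0,1]` and `β ∈ (1,∞)` with `φ̄_∞^{α,β}(σu) = α` and
`φ̄_∞^{α,β}(σv) = α+β−k+1`; (b) for every such pair `(α,β)`,
`h(Σ(u,v)) = log₂ β`. -/
theorem entropy_computation (k : ℕ) (hk : 2 ≤ k) (u v : ℕ → ℕ)
    (hu : ∀ i, u i < k) (hv : ∀ i, v i < k)
    (hu0 : u 0 = 0) (hv0 : v 0 = k - 1)
    (hcond : ∀ n, lexLe u (shft^[n] u) ∧ lexLe (shft^[n] u) v ∧
                  lexLe u (shft^[n] v) ∧ lexLe (shft^[n] v) v)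
    (hk2 : k = 2 → lexLe (shft u) (shft v)) :
    (0 < entS k u v →
      ∃ α β : ℝ, α ∈ Set.Icc (0 : ℝ) 1 ∧ 1 < β ∧
        phiBInf α β (shft u) = α ∧ phiBInf α β (shft v) = α + β - k + 1) ∧
    (∀ α β : ℝ, α ∈ Set.Icc (0 : ℝ) 1 → 1 < β →
      phiBInf α β (shft u) = α → phiBInf α β (shft v) = α + β - k + 1 →
      entS k u v = Real.logb 2 β) := by
  have D : UV k u v := by
    refine ⟨hk, ⟨hu, fun n => ⟨(hcond n).1, (hcond n).2.1⟩⟩,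
      ⟨hv, fun n => ⟨(hcond n).2.2.1, (hcond n).2.2.2⟩⟩, hu0, hv0⟩
  refine ⟨part_a D, fun α β hα hβ h1 h2 => ?_⟩
  have H := lin_of_phi D hα hβ h1 h2
  have e : lam k u v = β := le_antisymm (upper_bound D H) (lower_bound D H)
  rw [← e, lam, Real.logb_rpow (by norm_num) (by norm_num)]
end

section
/- Inverse problem for βx+α mod 1 (first form). Let k ≥ 2 and let u, v ∈ A^ℕ satisfy u₀ = 0, v₀ = k−1, and u ≼ σⁿu ≺ v and u ≺ σⁿv ≼ v for all n ≥ 0; if k = 2 assume additionally σu ≼ σv. Let û := sup{σⁿu : n ≥ 0} (supremum in the lexicographic order) and β̂ := 2^{h(Σ(u,û))}. Suppose (ᾱ,β̄) ∈ [0,1]×(1,∞) satisfies φ̄_∞^{ᾱ,β̄}(σu) = ᾱ and φ̄_∞^{ᾱ,β̄}(σv) = ᾱ+β̄−k+1. Then: (1) if β̂ < β̄, then u = u^{ᾱ,β̄} and v = v^{ᾱ,β̄}; (2) if β̂ = β̄ and u^{ᾱ,β̄}, v^{ᾱ,β̄} are not both periodic, then u = u^{ᾱ,β̄} and v = v^{ᾱ,β̄};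 (3) if β̂ = β̄ and u^{ᾱ,β̄}, v^{ᾱ,β̄} are both periodic, then u ≠ u^{ᾱ,β̄} and v ≠ v^{ᾱ,β̄}. -/
open Filter Set

namespace InvP

lemma shft_iter (n : ℕ) (x : ℕ → ℕ) (i : ℕ) : (shft^[n] x) i = x (i + n) := by
  induction n generalizing x with
  | zero => rfl
  | succ n ih => rw [Function.iterate_succ_apply, ih]; simp [shft, add_assoc]

lemma shft_iter_succ (n : ℕ) (x : ℕ → ℕ) : shft^[n+1] x = shft (shft^[n] x) :=
  Function.iterate_succ_apply' _ _ _

lemma lexLe_iff (x y : ℕ → ℕ) : lexLe x y ↔ toLex x ≤ toLex y := by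
  rw [le_iff_eq_or_lt]
  rfl

lemma lexLt_iff (x y : ℕ → ℕ) : lexLt x y ↔ toLex x < toLex y := Iff.rfl

lemma lexLe_trans {x y z : ℕ → ℕ} (h : lexLe x y) (h' : lexLe y z) : lexLe x z := by
  rw [lexLe_iff] at *; exact h.trans h'

lemma lexLe_total (x y : ℕ → ℕ) : lexLe x y ∨ lexLt y x := by
  rw [lexLe_iff, lexLt_iff]; exact le_or_gt _ _

lemma lexLe_lt_trans {x y z : ℕ → ℕ} (h : lexLe x y) (h' : lexLt y z) : lexLt x z := by
  rw [lexLe_iff] at h; rw [lexLt_iff] at *; exact h.trans_lt h'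

lemma lexLe_zero {x y : ℕ → ℕ} (h : lexLe x y) : x 0 ≤ y 0 := by
  rcases h with rfl | ⟨m, h1, h2⟩
  · exact le_rfl
  · rcases Nat.eq_zero_or_pos m with rfl | hm
    · exact h2.le
    · exact (h1 0 hm).le

lemma lexLe_tail {x y : ℕ → ℕ} (h : lexLe x y) (h0 : x 0 = y 0) : lexLe (shft x) (shft y) := by
  rcases h with rfl | ⟨m, h1, h2⟩
  · exact Or.inl rfl
  · cases m with
    | zero => omega
    | succ m => exact Or.inr ⟨m, fun i hi => h1 (i+1) (by omega), h2⟩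

/-! ### The functions phi -/

lemma phiB_eq {α β : ℝ} (hβ : 0 < β) (t : ℝ) :
    phiB α β t = max 0 (min 1 ((t - α) / β)) := by
  unfold phiB
  split_ifs with h1 h2
  · have : (t - α) / β ≤ 0 := div_nonpos_of_nonpos_of_nonneg (by linarith) hβ.le
    rw [min_eq_right (by linarith), max_eq_left this]
  · have : 1 ≤ (t - α) / β := by rw [le_div_iff₀ hβ]; linarith
    rw [min_eq_left this]; norm_num
  · have h3 : 0 ≤ (t - α) / β := div_nonneg (by linarith) hβ.le
    have : (t - α) / β ≤ 1 := by rw [div_le_iff₀ hβ]; linarith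
    rw [min_eq_right this, max_eq_right h3]

lemma phiB_mono {α β : ℝ} (hβ : 0 < β) : Monotone (phiB α β) := by
  intro s t h
  rw [phiB_eq hβ, phiB_eq hβ]
  gcongr

lemma phiB_cont {α β : ℝ} (hβ : 0 < β) : Continuous (phiB α β) := by
  have : phiB α β = fun t => max 0 (min 1 ((t - α) / β)) := funext (phiB_eq hβ)
  rw [this]; fun_prop

lemma phiB_nonneg {α β : ℝ} (hβ : 0 < β) (t : ℝ) : 0 ≤ phiB α β t := by
  rw [phiB_eq hβ]; exact le_max_left _ _

lemma phiB_le_one {α β : ℝ} (hβ : 0 < β) (t : ℝ) : phiB α β t ≤ 1 := by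
  rw [phiB_eq hβ]; exact max_le zero_le_one (min_le_left _ _)

lemma phiB_affine {α β t : ℝ} (hβ : 0 < β) (h1 : α ≤ t) (h2 : t ≤ α + β) :
    β * phiB α β t = t - α := by
  have h3 : 0 ≤ (t - α) / β := div_nonneg (by linarith) hβ.le
  have h4 : (t - α) / β ≤ 1 := by rw [div_le_iff₀ hβ]; linarith
  rw [phiB_eq hβ, min_eq_right h4, max_eq_right h3]
  field_simp

lemma phiBN_nonneg {α β : ℝ} (hβ : 0 < β) (n : ℕ) (x : ℕ → ℕ) : 0 ≤ phiBN α β n x := by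
  cases n with
  | zero => exact le_rfl
  | succ n => exact phiB_nonneg hβ _

lemma phiBN_le_one {α β : ℝ} (hβ : 0 < β) (n : ℕ) (x : ℕ → ℕ) : phiBN α β n x ≤ 1 := by
  cases n with
  | zero => exact zero_le_one
  | succ n => exact phiB_le_one hβ _

lemma phiBN_mono {α β : ℝ} (hβ : 0 < β) (x : ℕ → ℕ) : Monotone (fun n => phiBN α β n x) := by
  apply monotone_nat_of_le_succ
  intro n
  induction n generalizing x with
  | zero => exact phiBN_nonneg hβ _ _
  | succ n ih =>
    change phiB α β (x 0 + phiBN α β n (shft x)) ≤ phiB α β (x 0 + phiBN α β (n+1) (shft x))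
    apply phiB_mono hβ
    have := ih (shft x)
    linarith

lemma phi_tendsto {α β : ℝ} (hβ : 0 < β) (x : ℕ → ℕ) :
    Tendsto (fun n => phiBN α β n x) atTop (nhds (phiBInf α β x)) := by
  apply tendsto_atTop_ciSup (phiBN_mono hβ x)
  refine ⟨1, ?_⟩
  rintro _ ⟨n, rfl⟩
  exact phiBN_le_one hβ n x

lemma phi_nonneg {α β : ℝ} (hβ : 0 < β) (x : ℕ → ℕ) : 0 ≤ phiBInf α β x :=
  ge_of_tendsto' (phi_tendsto hβ x) (fun n => phiBN_nonneg hβ n x)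

lemma phi_le_one {α β : ℝ} (hβ : 0 < β) (x : ℕ → ℕ) : phiBInf α β x ≤ 1 :=
  le_of_tendsto' (phi_tendsto hβ x) (fun n => phiBN_le_one hβ n x)

lemma phi_rec {α β : ℝ} (hβ : 0 < β) (x : ℕ → ℕ) :
    phiBInf α β x = phiB α β (x 0 + phiBInf α β (shft x)) := by
  have h1 := (tendsto_add_atTop_iff_nat 1).2 (phi_tendsto (α := α) hβ x)
  have h2 : Tendsto (fun n => phiB α β (x 0 + phiBN α β n (shft x))) atTop
      (nhds (phiB α β (x 0 + phiBInf α β (shft x)))) :=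
    ((phiB_cont hβ).tendsto _).comp (tendsto_const_nhds.add (phi_tendsto hβ (shft x)))
  exact tendsto_nhds_unique h1 h2

lemma phi_mono_lt {α β : ℝ} (hβ : 0 < β) (m : ℕ) : ∀ x y : ℕ → ℕ,
    (∀ i, i < m → x i = y i) → x m < y m → phiBInf α β x ≤ phiBInf α β y := by
  induction m with
  | zero =>
    intro x y _ h
    rw [phi_rec hβ x, phi_rec hβ y]
    apply phiB_mono hβ
    have h1 := phi_le_one (α := α) hβ (shft x)
    have h2 := phi_nonneg (α := α) hβ (shft y)
    have h3 : (x 0 : ℝ) + 1 ≤ y 0 := by exact_mod_cast h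
    linarith
  | succ m ih =>
    intro x y h h'
    rw [phi_rec hβ x, phi_rec hβ y]
    apply phiB_mono hβ
    have h1 := ih (shft x) (shft y) (fun i hi => h (i+1) (by omega)) h'
    rw [h 0 (by omega)]
    linarith

lemma phi_mono {α β : ℝ} (hβ : 0 < β) {x y : ℕ → ℕ} (h : lexLe x y) :
    phiBInf α β x ≤ phiBInf α β y := by
  rcases h with rfl | ⟨m, h1, h2⟩
  · exact le_rfl
  · exact phi_mono_lt hβ m x y h1 h2

/-- `s` is a (closed) affine orbit coded by `x`. -/
structure Orb (α β : ℝ) (x : ℕ → ℕ) (s : ℕ → ℝ) : Prop where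
  nonneg : ∀ n, 0 ≤ s n
  le_one : ∀ n, s n ≤ 1
  step : ∀ n, s (n+1) = β * s n + α - x n

lemma Orb.shift {α β : ℝ} {x : ℕ → ℕ} {s : ℕ → ℝ} (h : Orb α β x s) (m : ℕ) :
    Orb α β (shft^[m] x) (fun n => s (n + m)) := by
  refine ⟨fun n => h.nonneg _, fun n => h.le_one _, fun n => ?_⟩
  rw [shft_iter]
  have := h.step (n + m)
  rw [← this]; congr 1; omega

lemma Orb.diff {α β : ℝ} {x y : ℕ → ℕ} {s t : ℕ → ℝ}
    (hs : Orb α β x s) (ht : Orb α β y t) (m : ℕ) (h : ∀ i, i < m → x i = y i) :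
    s m - t m = β ^ m * (s 0 - t 0) := by
  induction m with
  | zero => simp
  | succ m ih =>
    rw [hs.step, ht.step, h m (by omega), pow_succ]
    have := ih (fun i hi => h i (by omega))
    linear_combination β * this

lemma Orb.lex {α β : ℝ} (hβ : 1 < β) {x y : ℕ → ℕ} {s t : ℕ → ℝ}
    (hs : Orb α β x s) (ht : Orb α β y t) (h : lexLt x y) :
    s 0 ≤ t 0 ∧ (s 0 = t 0 → ∃ j, s j = 1 ∧ t j = 0) := by
  obtain ⟨m, h1, h2⟩ := h
  have hd := hs.diff ht m h1
  have e1 := hs.step m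
  have e2 := ht.step m
  have a1 := hs.le_one (m+1)
  have a2 := ht.nonneg (m+1)
  have h3 : (x m : ℝ) + 1 ≤ y m := by exact_mod_cast h2
  have hp : 0 < β ^ m := by positivity
  constructor
  · by_contra hc
    push Not at hc
    have : 0 < β ^ m * (s 0 - t 0) := mul_pos hp (by linarith)
    nlinarith
  · intro h0
    refine ⟨m+1, ?_⟩
    rw [h0] at hd
    have hd' : s m = t m := by linarith
    rw [hd'] at e1
    constructor <;> linarith

end InvP

namespace InvP

/-- The standing hypotheses on `u`, `v`. -/
structure Setup (k : ℕ) (u v : ℕ → ℕ) (α β : ℝ) : Prop where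
  hk : 2 ≤ k
  hu0 : u 0 = 0
  hv0 : v 0 = k - 1
  hcond : ∀ n, lexLe u (shft^[n] u) ∧ lexLt (shft^[n] u) v ∧
                  lexLt u (shft^[n] v) ∧ lexLe (shft^[n] v) v
  hα0 : 0 ≤ α
  hα1 : α ≤ 1
  hβ : 1 < β
  hequ : phiBInf α β (shft u) = α
  heqv : phiBInf α β (shft v) = α + β - k + 1

variable {k : ℕ} {u v : ℕ → ℕ} {α β : ℝ}

lemma Setup.orb (S : Setup k u v α β) {x : ℕ → ℕ}
    (hx : ∀ n, lexLe u (shft^[n] x) ∧ lexLe (shft^[n] x) v) :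
    Orb α β x (fun n => phiBInf α β (shft^[n] x)) := by
  have hβ : 0 < β := by linarith [S.hβ]
  refine ⟨fun n => phi_nonneg hβ _, fun n => phi_le_one hβ _, fun n => ?_⟩
  have key : ∀ y : ℕ → ℕ, lexLe u y → lexLe y v →
      phiBInf α β (shft y) = β * phiBInf α β y + α - y 0 := by
    intro y h1 h2
    have n1 := phi_nonneg (α := α) hβ (shft y)
    have n2 := phi_le_one (α := α) hβ (shft y)
    rw [phi_rec hβ y, phiB_affine hβ]
    · ring
    · rcases Nat.eq_zero_or_pos (y 0) with h0 | h0
      · have := phi_mono (α := α) hβ (lexLe_tail h1 (by rw [S.hu0, h0]))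
        rw [S.hequ] at this
        rw [h0]; push_cast; linarith
      · have : (1 : ℝ) ≤ y 0 := by exact_mod_cast h0
        linarith [S.hα1]
    · have hk := S.hk
      have hle := lexLe_zero h2
      have hv0 := S.hv0
      have hvn := phi_nonneg (α := α) hβ (shft v)
      rw [S.heqv] at hvn
      by_cases h0 : y 0 = v 0
      · have := phi_mono (α := α) hβ (lexLe_tail h2 h0)
        rw [S.heqv] at this
        have hc : (y 0 : ℝ) + 1 = k := by
          have : y 0 + 1 = k := by omega
          exact_mod_cast this
        linarith
      · have : (y 0 : ℝ) + 2 ≤ k := by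
          have : y 0 + 2 ≤ k := by omega
          exact_mod_cast this
        linarith
  have := key (shft^[n] x) (hx n).1 (hx n).2
  simp only [shft_iter_succ]
  rw [this, shft_iter]; simp

/-- The orbit of the string `x`. -/
noncomputable def orbOf (α β : ℝ) (x : ℕ → ℕ) : ℕ → ℝ := fun n => phiBInf α β (shft^[n] x)

lemma Setup.orbU (S : Setup k u v α β) : Orb α β u (orbOf α β u) :=
  S.orb fun n => ⟨(S.hcond n).1, Or.inr (S.hcond n).2.1⟩

lemma Setup.orbV (S : Setup k u v α β) : Orb α β v (orbOf α β v) :=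
  S.orb fun n => ⟨Or.inr (S.hcond n).2.2.1, (S.hcond n).2.2.2⟩

lemma Setup.U0 (S : Setup k u v α β) : orbOf α β u 0 = 0 := by
  have hβ : 0 < β := by linarith [S.hβ]
  have h := S.orbU.step 0
  have h1 : orbOf α β u (0+1) = α := S.hequ
  rw [h1, S.hu0] at h
  have : β * orbOf α β u 0 = 0 := by push_cast at h; linarith
  rcases mul_eq_zero.1 this with h | h
  · linarith
  · exact h

lemma Setup.V0 (S : Setup k u v α β) : orbOf α β v 0 = 1 := by
  have hβ : 0 < β := by linarith [S.hβ]
  have h := S.orbV.step 0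
  have h1 : orbOf α β v (0+1) = α + β - k + 1 := S.heqv
  have hc : (v 0 : ℝ) + 1 = k := by
    have : v 0 + 1 = k := by have := S.hk; have := S.hv0; omega
    exact_mod_cast this
  rw [h1] at h
  have : β * (orbOf α β v 0 - 1) = 0 := by linarith
  rcases mul_eq_zero.1 this with h | h
  · linarith
  · linarith

lemma Setup.bad_uv (S : Setup k u v α β) {n : ℕ} (h : orbOf α β u n = 1) :
    ∃ j, orbOf α β v j = 0 := by
  have := ((S.orbU.shift n).lex S.hβ S.orbV (S.hcond n).2.1).2 (by simp [h, S.V0])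
  obtain ⟨j, _, hj⟩ := this
  exact ⟨j, hj⟩

lemma Setup.bad_vu (S : Setup k u v α β) {n : ℕ} (h : orbOf α β v n = 0) :
    ∃ j, orbOf α β u j = 1 := by
  have := (S.orbU.lex S.hβ (S.orbV.shift n) (S.hcond n).2.2.1).2 (by simp [h, S.U0])
  obtain ⟨j, hj, _⟩ := this
  exact ⟨j, hj⟩

lemma Tlow_lt (α β x : ℝ) : Tlow α β x < 1 := by
  unfold Tlow; linarith [Int.lt_floor_add_one (β * x + α)]

lemma Tlow_nonneg (α β x : ℝ) : 0 ≤ Tlow α β x := by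
  unfold Tlow; linarith [Int.floor_le (β * x + α)]

lemma Thigh_le (α β x : ℝ) : Thigh α β x ≤ 1 := by
  unfold Thigh; linarith [Int.le_ceil (β * x + α)]

lemma Thigh_pos (α β x : ℝ) : 0 < Thigh α β x := by
  unfold Thigh; linarith [Int.ceil_lt_add_one (β * x + α)]

lemma floor_of {t r : ℝ} {d : ℕ} (h : r = t - d) (h0 : 0 ≤ r) (h1 : r < 1) : ⌊t⌋ = (d : ℤ) := by
  rw [Int.floor_eq_iff]; push_cast; constructor <;> linarith

lemma ceil_of {t r : ℝ} {d : ℕ} (h : r = t - d) (h0 : 0 < r) (h1 : r ≤ 1) :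
    ⌈t⌉ = (d : ℤ) + 1 := by
  rw [Int.ceil_eq_iff]; push_cast; constructor <;> linarith

lemma Orb.tlow {x : ℕ → ℕ} {s : ℕ → ℝ} (h : Orb α β x s) (m : ℕ) (hm : ∀ i, i ≤ m → s i < 1) :
    (Tlow α β)^[m] (s 0) = s m := by
  induction m with
  | zero => rfl
  | succ m ih =>
    rw [Function.iterate_succ_apply', ih (fun i hi => hm i (by omega))]
    have := h.step m
    unfold Tlow
    rw [floor_of this (h.nonneg _) (hm _ le_rfl), this]; push_cast; ring

lemma Orb.thigh {x : ℕ → ℕ} {s : ℕ → ℝ} (h : Orb α β x s) (m : ℕ) (hm : ∀ i, i ≤ m → 0 < s i) :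
    (Thigh α β)^[m] (s 0) = s m := by
  induction m with
  | zero => rfl
  | succ m ih =>
    rw [Function.iterate_succ_apply', ih (fun i hi => hm i (by omega))]
    have := h.step m
    unfold Thigh
    rw [ceil_of this (hm _ le_rfl) (h.le_one _), this]; push_cast; ring

lemma Setup.good_u (S : Setup k u v α β) (h : ∀ n, orbOf α β u n < 1) : u = uItin α β := by
  funext n
  unfold uItin
  rw [← S.U0, S.orbU.tlow n (fun i _ => h i),
    floor_of (S.orbU.step n) (S.orbU.nonneg _) (h _)]
  simp

lemma Setup.good_v (S : Setup k u v α β) (h : ∀ n, 0 < orbOf α β v n) : v = vItin α β := by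
  funext n
  unfold vItin
  rw [← S.V0, S.orbV.thigh n (fun i _ => h i),
    ceil_of (S.orbV.step n) (h _) (S.orbV.le_one _)]
  simp

lemma Setup.u_good (S : Setup k u v α β) (h : u = uItin α β) (n : ℕ) : orbOf α β u n < 1 := by
  have key : ∀ n, (Tlow α β)^[n] 0 = orbOf α β u n := by
    intro n
    induction n with
    | zero => exact S.U0.symm
    | succ n ih =>
      rw [Function.iterate_succ_apply', ih, S.orbU.step n]
      have e : u n = (⌊β * orbOf α β u n + α⌋).toNat := by
        conv_lhs => rw [h]
        unfold uItin; rw [ih]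
      have hn : 0 ≤ ⌊β * orbOf α β u n + α⌋ := by
        apply Int.floor_nonneg.2
        have := S.orbU.nonneg n
        have := S.hα0
        have := S.hβ
        positivity
      have e2 : (u n : ℝ) = ⌊β * orbOf α β u n + α⌋ := by
        have : (u n : ℤ) = ⌊β * orbOf α β u n + α⌋ := by rw [e, Int.toNat_of_nonneg hn]
        exact_mod_cast this
      unfold Tlow
      rw [e2]
  rw [← key]
  cases n with
  | zero => simp
  | succ n => rw [Function.iterate_succ_apply']; exact Tlow_lt _ _ _

lemma Setup.v_good (S : Setup k u v α β) (h : v = vItin α β) (n : ℕ) : 0 < orbOf α β v n := by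
  have key : ∀ n, (Thigh α β)^[n] 1 = orbOf α β v n ∧ 0 < orbOf α β v n := by
    intro n
    induction n with
    | zero => rw [S.V0]; simp
    | succ n ih =>
      obtain ⟨ih, hp⟩ := ih
      have e : v n = (⌈β * orbOf α β v n + α⌉ - 1).toNat := by
        conv_lhs => rw [h]
        unfold vItin; rw [ih]
      have hn : 0 < ⌈β * orbOf α β v n + α⌉ := by
        apply Int.ceil_pos.2
        have := S.hα0
        have := S.hβ
        positivity
      have e2 : (v n : ℝ) = ⌈β * orbOf α β v n + α⌉ - 1 := by
        have : (v n : ℤ) = ⌈β * orbOf α β v n + α⌉ - 1 := by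
          rw [e, Int.toNat_of_nonneg (by omega)]
        exact_mod_cast this
      have : (Thigh α β)^[n+1] 1 = orbOf α β v (n+1) := by
        rw [Function.iterate_succ_apply', ih, S.orbV.step n]
        unfold Thigh
        rw [e2]; ring
      refine ⟨this, ?_⟩
      rw [← this, Function.iterate_succ_apply']
      exact Thigh_pos _ _ _
  exact (key n).2

lemma Setup.bad_u_periodic (S : Setup k u v α β) {n : ℕ} (h : orbOf α β u n = 1) :
    ∃ p, 1 ≤ p ∧ shft^[p] (uItin α β) = uItin α β := by
  classical
  have hex : ∃ n, orbOf α β u n = 1 := ⟨n, h⟩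
  obtain ⟨p, hp⟩ : ∃ p, Nat.find hex = p + 1 := by
    refine Nat.exists_eq_succ_of_ne_zero ?_
    intro h0
    have := Nat.find_spec hex
    rw [h0, S.U0] at this
    norm_num at this
  have h1 : orbOf α β u (p+1) = 1 := hp ▸ Nat.find_spec hex
  have hlt : ∀ i, i ≤ p → orbOf α β u i < 1 := fun i hi =>
    lt_of_le_of_ne (S.orbU.le_one i) (Nat.find_min hex (by omega))
  have hT : (Tlow α β)^[p+1] 0 = 0 := by
    rw [Function.iterate_succ_apply', ← S.U0, S.orbU.tlow p hlt]
    have := S.orbU.step p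
    have e : β * orbOf α β u p + α = ((u p + 1 : ℤ) : ℝ) := by push_cast; linarith
    rw [S.U0]
    unfold Tlow
    rw [e, Int.floor_intCast]; simp
  refine ⟨p+1, by omega, ?_⟩
  funext i
  rw [shft_iter]
  unfold uItin
  rw [Function.iterate_add_apply, hT]

lemma Setup.bad_v_periodic (S : Setup k u v α β) {n : ℕ} (h : orbOf α β v n = 0) :
    ∃ p, 1 ≤ p ∧ shft^[p] (vItin α β) = vItin α β := by
  classical
  have hex : ∃ n, orbOf α β v n = 0 := ⟨n, h⟩
  obtain ⟨p, hp⟩ : ∃ p, Nat.find hex = p + 1 := by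
    refine Nat.exists_eq_succ_of_ne_zero ?_
    intro h0
    have := Nat.find_spec hex
    rw [h0, S.V0] at this
    norm_num at this
  have h1 : orbOf α β v (p+1) = 0 := hp ▸ Nat.find_spec hex
  have hlt : ∀ i, i ≤ p → 0 < orbOf α β v i := fun i hi =>
    lt_of_le_of_ne (S.orbV.nonneg i) (Ne.symm (Nat.find_min hex (by omega)))
  have hT : (Thigh α β)^[p+1] 1 = 1 := by
    rw [Function.iterate_succ_apply', ← S.V0, S.orbV.thigh p hlt]
    have := S.orbV.step p
    have e : β * orbOf α β v p + α = ((v p : ℤ) : ℝ) := by push_cast; linarith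
    rw [S.V0]
    unfold Thigh
    rw [e, Int.ceil_intCast]; simp
  refine ⟨p+1, by omega, ?_⟩
  funext i
  rw [shft_iter]
  unfold vItin
  rw [Function.iterate_add_apply, hT]

/-! ### Lower bound on the entropy -/

lemma words_finite (k : ℕ) (u w : ℕ → ℕ) (n : ℕ) :
    Finite {w' : Fin n → ℕ // ∃ x ∈ SigSet k u w, ∀ i : Fin n, x i.1 = w' i} := by
  have : {w' : Fin n → ℕ | ∃ x ∈ SigSet k u w, ∀ i : Fin n, x i.1 = w' i} ⊆
      Set.pi Set.univ (fun _ => Set.Iio k) := by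
    rintro w' ⟨x, hx, hw⟩ i _
    rw [← hw]; exact hx.1 _
  exact ((Set.Finite.pi' (fun _ => Set.finite_Iio k)).subset
    (fun w' h i => this h i (Set.mem_univ i))).to_subtype

lemma nWords_le (k : ℕ) (u w : ℕ → ℕ) (n : ℕ) : nWords k u w n ≤ k ^ n := by
  have : Function.Injective (fun (w' : {w' : Fin n → ℕ // ∃ x ∈ SigSet k u w,
      ∀ i : Fin n, x i.1 = w' i}) (i : Fin n) => (⟨w'.1 i, by
        obtain ⟨x, hx, hw⟩ := w'.2
        rw [← hw]; exact hx.1 _⟩ : Fin k)) := by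
    intro a b hab
    apply Subtype.ext
    funext i
    have := congrFun hab i
    simpa using this
  have := Nat.card_le_card_of_injective _ this
  simpa [nWords] using this

lemma Setup.alpha_beta_le (S : Setup k u v α β) : α + β ≤ k := by
  have := phi_le_one (α := α) (β := β) (by linarith [S.hβ]) (shft v)
  rw [S.heqv] at this; linarith

/-- Itinerary. -/
noncomputable def itin (α β y : ℝ) : ℕ → ℕ := fun n => (⌊β * (Tlow α β)^[n] y + α⌋).toNat

lemma Setup.orbItin (S : Setup k u v α β) {y : ℝ} (h0 : 0 ≤ y) (h1 : y < 1) :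
    Orb α β (itin α β y) (fun n => (Tlow α β)^[n] y) ∧ (∀ n, (Tlow α β)^[n] y < 1) ∧
    ∀ n, itin α β y n < k := by
  have hn : ∀ n, 0 ≤ (Tlow α β)^[n] y := by
    intro n
    cases n with
    | zero => exact h0
    | succ n => rw [Function.iterate_succ_apply']; exact Tlow_nonneg _ _ _
  have hl : ∀ n, (Tlow α β)^[n] y < 1 := by
    intro n
    cases n with
    | zero => exact h1
    | succ n => rw [Function.iterate_succ_apply']; exact Tlow_lt _ _ _
  have hf : ∀ n, 0 ≤ ⌊β * (Tlow α β)^[n] y + α⌋ := by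
    intro n
    apply Int.floor_nonneg.2
    have := hn n
    have := S.hα0
    have := S.hβ
    positivity
  refine ⟨⟨hn, fun n => (hl n).le, fun n => ?_⟩, hl, fun n => ?_⟩
  · have : ((itin α β y n : ℕ) : ℝ) = ⌊β * (Tlow α β)^[n] y + α⌋ := by
      have : ((itin α β y n : ℕ) : ℤ) = ⌊β * (Tlow α β)^[n] y + α⌋ := by
        unfold itin; rw [Int.toNat_of_nonneg (hf n)]
      exact_mod_cast this
    simp only [Function.iterate_succ_apply']
    rw [this]; rfl
  · have : ⌊β * (Tlow α β)^[n] y + α⌋ < k := by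
      apply Int.floor_lt.2
      have := hl n
      have := S.hβ
      have := S.alpha_beta_le
      push_cast
      nlinarith
    have := hf n
    unfold itin
    omega

lemma Setup.itin_mem (S : Setup k u v α β) {n : ℕ} (hbad : orbOf α β u n = 1)
    {w : ℕ → ℕ} (hw : lexLe (shft^[n] u) w) {y : ℝ} (h0 : 0 ≤ y) (h1 : y < 1) :
    itin α β y ∈ SigSet k u w := by
  obtain ⟨ho, hl, hk⟩ := S.orbItin h0 h1
  refine ⟨hk, fun m => ⟨?_, ?_⟩⟩
  · rcases lexLe_total u (shft^[m] (itin α β y)) with h | h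
    · exact h
    · exfalso
      have := (ho.shift m).lex S.hβ S.orbU h
      simp only [S.U0] at this
      obtain ⟨j, hj, _⟩ := this.2 (le_antisymm this.1 (ho.nonneg _))
      exact absurd hj (hl _).ne
  · rcases lexLe_total (shft^[m] (itin α β y)) w with h | h
    · exact h
    · exfalso
      have := ((S.orbU.shift n).lex S.hβ (ho.shift m) (lexLe_lt_trans hw h)).1
      simp only [zero_add, hbad] at this
      exact absurd (hl m) (not_lt.2 this)

lemma Setup.words_lower (S : Setup k u v α β) {n : ℕ} (hbad : orbOf α β u n = 1)
    {w : ℕ → ℕ} (hw : lexLe (shft^[n] u) w) (m : ℕ) : β ^ m ≤ nWords k u w m := by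
  have hβ := S.hβ
  have hpm : 0 < β ^ m := by positivity
  set M := ⌈β ^ m⌉₊ with hM
  have hy : ∀ j : Fin M, 0 ≤ (j : ℝ) / β ^ m ∧ (j : ℝ) / β ^ m < 1 := by
    intro j
    refine ⟨by positivity, ?_⟩
    rw [div_lt_one hpm]
    exact Nat.lt_ceil.1 j.2
  have hfin := words_finite k u w m
  have hinj : Function.Injective (fun j : Fin M =>
      (⟨fun i : Fin m => itin α β ((j : ℝ) / β ^ m) i, _, S.itin_mem hbad hw (hy j).1 (hy j).2,
        fun i => rfl⟩ : {w' : Fin m → ℕ // ∃ x ∈ SigSet k u w, ∀ i : Fin m, x i.1 = w' i})) := by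
    intro a b hab
    have hab' : ∀ i, i < m → itin α β ((a : ℝ) / β ^ m) i = itin α β ((b : ℝ) / β ^ m) i := by
      intro i hi
      exact congrFun (congrArg Subtype.val hab) ⟨i, hi⟩
    obtain ⟨oa, la, _⟩ := S.orbItin (hy a).1 (hy a).2
    obtain ⟨ob, lb, _⟩ := S.orbItin (hy b).1 (hy b).2
    have hd := oa.diff ob m hab'
    have e : β ^ m * ((a : ℝ) / β ^ m - (b : ℝ) / β ^ m) = a - b := by field_simp
    simp only [Function.iterate_zero, id] at hd
    rw [e] at hd
    have a1 := la m
    have a2 := lb m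
    have a3 := oa.nonneg m
    have a4 := ob.nonneg m
    have c1 : ((a : ℕ) : ℝ) < (b : ℕ) + 1 := by linarith
    have c2 : ((b : ℕ) : ℝ) < (a : ℕ) + 1 := by linarith
    have c1' : (a : ℕ) < b + 1 := by exact_mod_cast c1
    have c2' : (b : ℕ) < a + 1 := by exact_mod_cast c2
    apply Fin.ext; omega
  have := Nat.card_le_card_of_injective _ hinj
  rw [Nat.card_eq_fintype_card, Fintype.card_fin] at this
  calc β ^ m ≤ (M : ℝ) := Nat.le_ceil _
    _ ≤ _ := by unfold nWords; exact_mod_cast this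

lemma ent_bdd (hk : 2 ≤ k) (u w : ℕ → ℕ) (n : ℕ) :
    Real.logb 2 (nWords k u w n) / (n : ℝ) ≤ Real.logb 2 k := by
  rcases Nat.eq_zero_or_pos n with rfl | hn
  · simp only [Nat.cast_zero, div_zero]
    apply Real.logb_nonneg (by norm_num)
    have : (2 : ℝ) ≤ k := by exact_mod_cast hk
    linarith
  · have hn' : (0 : ℝ) < n := by exact_mod_cast hn
    have hk1 : (2 : ℝ) ≤ k := by exact_mod_cast hk
    rw [div_le_iff₀ hn']
    rcases Nat.eq_zero_or_pos (nWords k u w n) with h | h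
    · rw [h]; simp only [Nat.cast_zero, Real.logb_zero]
      have := Real.logb_nonneg (b := 2) (by norm_num) (by linarith : (1 : ℝ) ≤ k)
      positivity
    · have : Real.logb 2 (nWords k u w n) ≤ Real.logb 2 ((k : ℝ) ^ n) := by
        apply Real.logb_le_logb_of_le (by norm_num) (by exact_mod_cast h)
        exact_mod_cast nWords_le k u w n
      rw [Real.logb_pow] at this
      linarith

lemma Setup.ent_lower (S : Setup k u v α β) {n : ℕ} (hbad : orbOf α β u n = 1)
    {w : ℕ → ℕ} (hw : lexLe (shft^[n] u) w) : β ≤ (2 : ℝ) ^ entS k u w := by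
  have hβ := S.hβ
  have h1 : Real.logb 2 β ≤ entS k u w := by
    unfold entS
    apply Filter.le_limsup_of_frequently_le
    · apply Filter.Eventually.frequently
      filter_upwards [eventually_ge_atTop 1] with m hm
      have hm' : (0 : ℝ) < m := by exact_mod_cast hm
      rw [le_div_iff₀ hm', mul_comm, ← Real.logb_pow]
      apply Real.logb_le_logb_of_le (by norm_num) (by positivity)
      exact S.words_lower hbad hw m
    · exact ⟨Real.logb 2 k, by
        simp only [eventually_map]
        exact Filter.Eventually.of_forall (fun m => ent_bdd S.hk u w m)⟩
  calc β = (2 : ℝ) ^ Real.logb 2 β := by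
        rw [Real.rpow_logb (by norm_num) (by norm_num) (by linarith)]
    _ ≤ _ := Real.rpow_le_rpow_of_exponent_le (by norm_num) h1

end InvP

namespace InvP

open MeasureTheory

variable {k : ℕ} {u v : ℕ → ℕ} {α β : ℝ}

/-- Length of the currently matched prefix of `u` along `x`. -/
def trk (u x : ℕ → ℕ) : ℕ → ℕ
  | 0 => 0
  | n + 1 => if x n = u (trk u x n) then trk u x n + 1 else 0

/-- Affine iterates of `y` along the digits `x`. -/
noncomputable def aff (α β : ℝ) (x : ℕ → ℕ) (y : ℝ) : ℕ → ℝ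
  | 0 => y
  | n + 1 => β * aff α β x y n + α - x n

lemma trk_congr (u : ℕ → ℕ) {x x' : ℕ → ℕ} (n : ℕ) (h : ∀ i, i < n → x i = x' i) :
    trk u x n = trk u x' n := by
  induction n with
  | zero => rfl
  | succ n ih => simp only [trk]; rw [ih (fun i hi => h i (by omega)), h n (by omega)]

lemma aff_congr {x x' : ℕ → ℕ} (y : ℝ) (n : ℕ) (h : ∀ i, i < n → x i = x' i) :
    aff α β x y n = aff α β x' y n := by
  induction n with
  | zero => rfl
  | succ n ih => simp only [aff]; rw [ih (fun i hi => h i (by omega)), h n (by omega)]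

lemma aff_eq (x : ℕ → ℕ) (y : ℝ) (n : ℕ) : aff α β x y n = β ^ n * y + aff α β x 0 n := by
  induction n with
  | zero => simp [aff]
  | succ n ih => simp only [aff]; rw [ih, pow_succ]; ring

lemma trk_lo {x : ℕ → ℕ} (h : ∀ n, lexLe u (shft^[n] x)) (n : ℕ) :
    lexLe (shft^[trk u x n] u) (shft^[n] x) := by
  induction n with
  | zero => exact h 0
  | succ n ih =>
    simp only [trk]
    split_ifs with h'
    · rw [shft_iter_succ, shft_iter_succ]
      exact lexLe_tail ih (by rw [shft_iter, shft_iter]; simpa using h'.symm)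
    · exact h (n+1)

lemma trk_hi {x : ℕ → ℕ} (h : ∀ n, lexLe (shft^[n] x) v) (n : ℕ) :
    lexLe (shft^[n] x) (shft^[trk v x n] v) := by
  induction n with
  | zero => exact h 0
  | succ n ih =>
    simp only [trk]
    split_ifs with h'
    · rw [shft_iter_succ, shft_iter_succ]
      exact lexLe_tail ih (by rw [shft_iter, shft_iter]; simpa using h')
    · exact h (n+1)

lemma trk_lo_digit {x : ℕ → ℕ} (h : ∀ n, lexLe u (shft^[n] x)) (n : ℕ) :
    u (trk u x n) ≤ x n := by
  have := lexLe_zero (trk_lo h n)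
  simpa [shft_iter] using this

lemma trk_hi_digit {x : ℕ → ℕ} (h : ∀ n, lexLe (shft^[n] x) v) (n : ℕ) :
    x n ≤ v (trk v x n) := by
  have := lexLe_zero (trk_hi h n)
  simpa [shft_iter] using this

/-- Left endpoint. -/
noncomputable def lo (α β : ℝ) (u x : ℕ → ℕ) (n : ℕ) : ℝ := orbOf α β u (trk u x n)

lemma Setup.lo_step (S : Setup k u v α β) {x : ℕ → ℕ} (h : ∀ n, lexLe u (shft^[n] x)) (n : ℕ) :
    (x n = u (trk u x n) ∧ lo α β u x (n+1) = β * lo α β u x n + α - x n) ∨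
    (u (trk u x n) < x n ∧ lo α β u x (n+1) = 0 ∧ β * lo α β u x n + α - x n ≤ 0) := by
  have hs := S.orbU.step (trk u x n)
  by_cases h' : x n = u (trk u x n)
  · left
    refine ⟨h', ?_⟩
    simp only [lo, trk, if_pos h']
    rw [hs, h']
  · right
    have hlt : u (trk u x n) < x n := lt_of_le_of_ne (trk_lo_digit h n) (Ne.symm h')
    refine ⟨hlt, ?_, ?_⟩
    · simp only [lo, trk, if_neg h', S.U0]
    · have := S.orbU.le_one (trk u x n + 1)
      have hc : (u (trk u x n) : ℝ) + 1 ≤ x n := by exact_mod_cast hlt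
      simp only [lo]
      linarith

lemma Setup.hi_step (S : Setup k u v α β) {x : ℕ → ℕ} (h : ∀ n, lexLe (shft^[n] x) v) (n : ℕ) :
    (x n = v (trk v x n) ∧ lo α β v x (n+1) = β * lo α β v x n + α - x n) ∨
    (x n < v (trk v x n) ∧ lo α β v x (n+1) = 1 ∧ 1 ≤ β * lo α β v x n + α - x n) := by
  have hs := S.orbV.step (trk v x n)
  by_cases h' : x n = v (trk v x n)
  · left
    refine ⟨h', ?_⟩
    simp only [lo, trk, if_pos h']
    rw [hs, h']
  · right
    have hlt : x n < v (trk v x n) := lt_of_le_of_ne (trk_hi_digit h n) h'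
    refine ⟨hlt, ?_, ?_⟩
    · simp only [lo, trk, if_neg h', S.V0]
    · have := S.orbV.nonneg (trk v x n + 1)
      have hc : (x n : ℝ) + 1 ≤ v (trk v x n) := by exact_mod_cast hlt
      simp only [lo]
      linarith

lemma Setup.lo_lt_hi (S : Setup k u v α β) (hU : ∀ n, orbOf α β u n < 1)
    (hV : ∀ n, 0 < orbOf α β v n) {x : ℕ → ℕ}
    (h : ∀ n, lexLe u (shft^[n] x) ∧ lexLe (shft^[n] x) v) (n : ℕ) :
    lo α β u x n < lo α β v x n := by
  induction n with
  | zero => simp [lo, trk, S.U0, S.V0]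
  | succ n ih =>
    rcases S.lo_step (fun n => (h n).1) n with ⟨_, e1⟩ | ⟨_, e1, _⟩ <;>
    rcases S.hi_step (fun n => (h n).2) n with ⟨_, e2⟩ | ⟨_, e2, _⟩
    · rw [e1, e2]
      have := S.hβ
      have : β * lo α β u x n < β * lo α β v x n := by gcongr
      linarith
    · rw [e2]; exact hU _
    · rw [e1]; exact hV _
    · rw [e1, e2]; norm_num

/-- Open cylinder. -/
def Cyl (α β : ℝ) (u v x : ℕ → ℕ) (n : ℕ) : Set ℝ :=
  {y | lo α β u x n < aff α β x y n ∧ aff α β x y n < lo α β v x n}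

lemma Cyl_congr {x x' : ℕ → ℕ} (n : ℕ) (h : ∀ i, i < n → x i = x' i) :
    Cyl α β u v x n = Cyl α β u v x' n := by
  unfold Cyl lo
  rw [trk_congr u n h, trk_congr v n h]
  ext y
  simp only [Set.mem_ofPred_eq]
  rw [aff_congr y n h]

lemma Setup.Cyl_succ (S : Setup k u v α β) {x : ℕ → ℕ}
    (h : ∀ n, lexLe u (shft^[n] x) ∧ lexLe (shft^[n] x) v) (n : ℕ) :
    Cyl α β u v x (n+1) ⊆ Cyl α β u v x n := by
  rintro y ⟨h1, h2⟩
  have hβ : 0 < β := by linarith [S.hβ]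
  simp only [aff] at h1 h2
  have l1 : β * lo α β u x n + α - x n ≤ lo α β u x (n+1) := by
    rcases S.lo_step (fun n => (h n).1) n with ⟨_, e1⟩ | ⟨_, e1, e3⟩
    · rw [e1]
    · rw [e1]; exact e3
  have l2 : lo α β v x (n+1) ≤ β * lo α β v x n + α - x n := by
    rcases S.hi_step (fun n => (h n).2) n with ⟨_, e1⟩ | ⟨_, e1, e3⟩
    · rw [e1]
    · rw [e1]; exact e3
  constructor
  · exact lt_of_mul_lt_mul_left (by linarith : β * _ < β * _) hβ.le
  · exact lt_of_mul_lt_mul_left (by linarith : β * _ < β * _) hβ.le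

lemma Setup.Cyl_anti (S : Setup k u v α β) {x : ℕ → ℕ}
    (h : ∀ n, lexLe u (shft^[n] x) ∧ lexLe (shft^[n] x) v) :
    Antitone (Cyl α β u v x) :=
  antitone_nat_of_succ_le (S.Cyl_succ h)

lemma Setup.Cyl_bounds (S : Setup k u v α β) {x : ℕ → ℕ} {n : ℕ} {y : ℝ}
    (hy : y ∈ Cyl α β u v x n) : 0 < aff α β x y n ∧ aff α β x y n < 1 :=
  ⟨(S.orbU.nonneg _).trans_lt hy.1, hy.2.trans_le (S.orbV.le_one _)⟩

lemma Setup.Cyl_floor (S : Setup k u v α β) {x : ℕ → ℕ}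
    (h : ∀ n, lexLe u (shft^[n] x) ∧ lexLe (shft^[n] x) v) {n : ℕ} {y : ℝ}
    (hy : y ∈ Cyl α β u v x n) {i : ℕ} (hi : i < n) :
    ⌊β * aff α β x y i + α⌋ = (x i : ℤ) := by
  have := S.Cyl_bounds (S.Cyl_anti h (show i + 1 ≤ n by omega) hy)
  exact floor_of (r := aff α β x y (i+1)) rfl this.1.le this.2

lemma Setup.Cyl_T (S : Setup k u v α β) {x : ℕ → ℕ}
    (h : ∀ n, lexLe u (shft^[n] x) ∧ lexLe (shft^[n] x) v) {n : ℕ} {y : ℝ}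
    (hy : y ∈ Cyl α β u v x n) {i : ℕ} (hi : i ≤ n) :
    (Tlow α β)^[i] y = aff α β x y i := by
  induction i with
  | zero => rfl
  | succ i ih =>
    rw [Function.iterate_succ_apply', ih (by omega)]
    unfold Tlow
    rw [S.Cyl_floor h hy (by omega)]; simp [aff]

lemma Setup.Cyl_disj (S : Setup k u v α β) {x x' : ℕ → ℕ}
    (h : ∀ n, lexLe u (shft^[n] x) ∧ lexLe (shft^[n] x) v)
    (h' : ∀ n, lexLe u (shft^[n] x') ∧ lexLe (shft^[n] x') v) {n : ℕ} {y : ℝ}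
    (hy : y ∈ Cyl α β u v x n) (hy' : y ∈ Cyl α β u v x' n) {i : ℕ} (hi : i < n) :
    x i = x' i := by
  have e1 := S.Cyl_floor h hy hi
  have e2 := S.Cyl_floor h' hy' hi
  rw [← S.Cyl_T h hy hi.le] at e1
  rw [← S.Cyl_T h' hy' hi.le] at e2
  have := e1.symm.trans e2
  exact_mod_cast this

lemma Cyl_eq (hβ : 0 < β) (x : ℕ → ℕ) (n : ℕ) : Cyl α β u v x n =
    Set.Ioo ((lo α β u x n - aff α β x 0 n) / β ^ n)
      ((lo α β v x n - aff α β x 0 n) / β ^ n) := by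
  have hp : 0 < β ^ n := by positivity
  ext y
  simp only [Cyl, Set.mem_ofPred_eq, Set.mem_Ioo]
  rw [aff_eq x y n, div_lt_iff₀ hp, lt_div_iff₀ hp]
  constructor <;> rintro ⟨h1, h2⟩ <;> constructor <;> linarith

lemma Cyl_vol (hβ : 0 < β) (x : ℕ → ℕ) (n : ℕ) : volume (Cyl α β u v x n) =
    ENNReal.ofReal ((lo α β v x n - lo α β u x n) / β ^ n) := by
  rw [Cyl_eq hβ, Real.volume_Ioo]; congr 1; ring

/-- Every interval contains a subinterval that is mapped into the hole `(c, 1)`. -/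
lemma hole (hβ : 1 < β) {c : ℝ} (hc0 : 0 ≤ c) (hc : c < 1) (N : ℕ) : ∀ a b : ℝ, 0 ≤ a → a < b →
    b ≤ 1 → 1 < β ^ N * (b - a) →
    ∃ l p q, a ≤ p ∧ p < q ∧ q ≤ b ∧ ∀ z ∈ Set.Ioo p q, c < (Tlow α β)^[l] z := by
  have hβ0 : 0 < β := by linarith
  induction N with
  | zero => intro a b h1 h2 h3 h4; simp at h4; linarith
  | succ N ih =>
    intro a b h1 h2 h3 h4
    by_cases hm : ∃ m : ℤ, β * a + α < m ∧ (m : ℝ) < β * b + α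
    · obtain ⟨m, m1, m2⟩ := hm
      refine ⟨1, max a ((m - (1 - c) - α) / β), (m - α) / β, le_max_left _ _, ?_, ?_, ?_⟩
      · apply max_lt
        · rw [lt_div_iff₀ hβ0]; linarith
        · gcongr; linarith
      · rw [div_le_iff₀ hβ0]; linarith
      · rintro z ⟨z1, z2⟩
        have z3 := (le_max_right _ _).trans_lt z1
        rw [div_lt_iff₀ hβ0] at z3
        rw [lt_div_iff₀ hβ0] at z2
        have : ⌊β * z + α⌋ = m - 1 := by
          rw [Int.floor_eq_iff]; push_cast; constructor <;> linarith
        simp only [Function.iterate_one, Tlow]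
        rw [this]; push_cast; linarith
    · push Not at hm
      set m := ⌊β * a + α⌋ with hmdef
      have f1 := Int.floor_le (β * a + α)
      have f2 := Int.lt_floor_add_one (β * a + α)
      rw [← hmdef] at f1 f2
      have f3 := hm (m + 1) (by push_cast; linarith)
      push_cast at f3
      have hab : β * a < β * b := by gcongr
      obtain ⟨l, p, q, p1, p2, p3, p4⟩ := ih (β * a + α - m) (β * b + α - m) (by linarith)
        (by linarith) (by linarith) (by
          have : β ^ N * (β * b + α - m - (β * a + α - m)) = β ^ (N+1) * (b - a) := by ring
          rw [this]; exact h4)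
      refine ⟨l + 1, (p + m - α) / β, (q + m - α) / β, ?_, ?_, ?_, ?_⟩
      · rw [le_div_iff₀ hβ0]; linarith
      · gcongr
      · rw [div_le_iff₀ hβ0]; linarith
      · rintro z ⟨z1, z2⟩
        rw [div_lt_iff₀ hβ0] at z1
        rw [lt_div_iff₀ hβ0] at z2
        have : ⌊β * z + α⌋ = m := by
          rw [Int.floor_eq_iff]; constructor <;> linarith
        rw [Function.iterate_succ_apply]
        have hT : Tlow α β z = β * z + α - m := by unfold Tlow; rw [this]
        rw [hT]
        apply p4
        constructor <;> linarith

lemma Setup.hole_unif (S : Setup k u v α β) {c : ℝ} (hc0 : 0 ≤ c) (hc : c < 1) {P Q : ℕ}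
    (hP : 1 ≤ P) (hQ : 1 ≤ Q) (hPu : shft^[P] u = u) (hQv : shft^[Q] v = v) :
    ∃ N : ℕ, ∀ i j, orbOf α β u i < orbOf α β v j → ∃ l p q, l ≤ N ∧
      orbOf α β u i ≤ p ∧ q ≤ orbOf α β v j ∧ 1 / ((N : ℝ) + 1) ≤ q - p ∧
      ∀ z ∈ Set.Ioo p q, c < (Tlow α β)^[l] z := by
  have perU : Function.Periodic (orbOf α β u) P := by
    intro n; unfold orbOf; rw [Function.iterate_add_apply, hPu]
  have perV : Function.Periodic (orbOf α β v) Q := by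
    intro n; unfold orbOf; rw [Function.iterate_add_apply, hQv]
  have key : ∀ s ∈ (Finset.range P ×ˢ Finset.range Q), ∀ᶠ N : ℕ in atTop,
      orbOf α β u s.1 < orbOf α β v s.2 → ∃ l p q, l ≤ N ∧
      orbOf α β u s.1 ≤ p ∧ q ≤ orbOf α β v s.2 ∧ 1 / ((N : ℝ) + 1) ≤ q - p ∧
      ∀ z ∈ Set.Ioo p q, c < (Tlow α β)^[l] z := by
    rintro ⟨i, j⟩ _
    by_cases hij : orbOf α β u i < orbOf α β v j
    · obtain ⟨M, hM⟩ := pow_unbounded_of_one_lt (1 / (orbOf α β v j - orbOf α β u i)) S.hβ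
      rw [div_lt_iff₀ (by linarith)] at hM
      obtain ⟨l, p, q, h1, h2, h3, h4⟩ := hole (α := α) S.hβ hc0 hc M _ _ (S.orbU.nonneg i) hij
        (S.orbV.le_one j) hM
      have ht := (tendsto_one_div_add_atTop_nhds_zero_nat (𝕜 := ℝ)).eventually_le_const
        (show 0 < q - p by linarith)
      filter_upwards [ht, eventually_ge_atTop l] with N hN hl _
      exact ⟨l, p, q, hl, h1, h3, hN, h4⟩
    · exact Filter.Eventually.of_forall (fun N h => absurd h hij)
  rw [← Filter.eventually_all_finset] at key
  obtain ⟨N, hN⟩ := key.exists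
  refine ⟨N, fun i j hij => ?_⟩
  rw [← perU.map_mod_nat i, ← perV.map_mod_nat j] at hij ⊢
  exact hN (i % P, j % Q) (by
    simp only [Finset.mem_product, Finset.mem_range]
    exact ⟨Nat.mod_lt _ hP, Nat.mod_lt _ hQ⟩) hij

end InvP

namespace InvP

open MeasureTheory

variable {k : ℕ} {u v : ℕ → ℕ} {α β : ℝ}

/-- Union of the cylinders of length `n` of a family `Y` of strings. -/
def BB (α β : ℝ) (u v : ℕ → ℕ) (Y : Set (ℕ → ℕ)) (n : ℕ) : Set ℝ := ⋃ x ∈ Y, Cyl α β u v x n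

/-- Words of length `n`. -/
abbrev Wd (Y : Set (ℕ → ℕ)) (n : ℕ) := {w : Fin n → ℕ // ∃ x ∈ Y, ∀ i : Fin n, x i.1 = w i}

/-- A representative of a word. -/
noncomputable def rep {Y : Set (ℕ → ℕ)} {n : ℕ} (w : Wd Y n) : ℕ → ℕ := w.2.choose

lemma rep_mem {Y : Set (ℕ → ℕ)} {n : ℕ} (w : Wd Y n) : rep w ∈ Y := w.2.choose_spec.1

lemma rep_eq {Y : Set (ℕ → ℕ)} {n : ℕ} (w : Wd Y n) (i : Fin n) : rep w i.1 = w.1 i :=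
  w.2.choose_spec.2 i

lemma BB_eq (Y : Set (ℕ → ℕ)) (n : ℕ) :
    BB α β u v Y n = ⋃ w : Wd Y n, Cyl α β u v (rep w) n := by
  ext y
  simp only [BB, Set.mem_iUnion]
  constructor
  · rintro ⟨x, hx, hy⟩
    refine ⟨⟨fun i => x i, x, hx, fun i => rfl⟩, ?_⟩
    rw [Cyl_congr n (x' := x)]
    · exact hy
    · intro i hi
      exact rep_eq _ ⟨i, hi⟩
  · rintro ⟨w, hw⟩
    exact ⟨rep w, rep_mem w, hw⟩

lemma Setup.BB_vol (S : Setup k u v α β) {Y : Set (ℕ → ℕ)}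
    (hY : ∀ x ∈ Y, ∀ n, lexLe u (shft^[n] x) ∧ lexLe (shft^[n] x) v) (n : ℕ) :
    volume (BB α β u v Y n) = ∑' w : Wd Y n, volume (Cyl α β u v (rep w) n) := by
  rw [BB_eq]
  apply measure_iUnion
  · intro w w' hne
    change Disjoint _ _
    rw [Set.disjoint_left]
    intro y hy hy'
    apply hne
    apply Subtype.ext
    funext i
    rw [← rep_eq w i, ← rep_eq w' i]
    exact S.Cyl_disj (hY _ (rep_mem w)) (hY _ (rep_mem w')) hy hy' i.2
  · intro w
    rw [Cyl_eq (by linarith [S.hβ])]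
    exact measurableSet_Ioo

lemma Setup.BB_zero (S : Setup k u v α β) (Y : Set (ℕ → ℕ)) :
    volume (BB α β u v Y 0) ≤ 1 := by
  have : BB α β u v Y 0 ⊆ Set.Ioo 0 1 := by
    intro y hy
    simp only [BB, Set.mem_iUnion] at hy
    obtain ⟨x, _, hy⟩ := hy
    exact S.Cyl_bounds hy
  calc _ ≤ volume (Set.Ioo (0:ℝ) 1) := measure_mono this
    _ = 1 := by simp

lemma Setup.BB_anti (S : Setup k u v α β) {Y : Set (ℕ → ℕ)}
    (hY : ∀ x ∈ Y, ∀ n, lexLe u (shft^[n] x) ∧ lexLe (shft^[n] x) v) :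
    Antitone (BB α β u v Y) := by
  intro m n h
  apply Set.iUnion₂_mono
  intro x hx
  exact S.Cyl_anti (hY x hx) h

lemma Setup.orb_hole (S : Setup k u v α β) {Y : Set (ℕ → ℕ)}
    (hY : ∀ x ∈ Y, ∀ n, lexLe u (shft^[n] x) ∧ lexLe (shft^[n] x) v)
    {c c' : ℝ} (hYc : ∀ x ∈ Y, ∀ n, orbOf α β x n ≤ c) {M : ℕ} (hM : 1 ≤ β ^ M * (c' - c))
    {n : ℕ} {y : ℝ} (hy : y ∈ BB α β u v Y (n + M)) : (Tlow α β)^[n] y ≤ c' := by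
  have hβ := S.hβ
  simp only [BB, Set.mem_iUnion] at hy
  obtain ⟨x, hx, hy⟩ := hy
  rw [S.Cyl_T (hY x hx) hy (show n ≤ n + M by omega)]
  have ho : Orb α β x (orbOf α β x) := S.orb (hY x hx)
  have key : ∀ M, aff α β x y (n + M) - orbOf α β x (n + M) =
      β ^ M * (aff α β x y n - orbOf α β x n) := by
    intro M
    induction M with
    | zero => simp
    | succ M ih =>
      rw [← add_assoc, ho.step]
      simp only [aff]
      rw [pow_succ]
      linear_combination β * ih
  have h1 := key M
  have h2 := (S.Cyl_bounds hy).2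
  have h3 := ho.nonneg (n + M)
  have h4 := hYc x hx n
  by_contra hcon
  push Not at hcon
  have hp : 0 < β ^ M := by positivity
  have : β ^ M * (c' - c) ≤ β ^ M * (aff α β x y n - orbOf α β x n) := by gcongr
  linarith

lemma Setup.contract (S : Setup k u v α β) {Y : Set (ℕ → ℕ)}
    (hY : ∀ x ∈ Y, ∀ n, lexLe u (shft^[n] x) ∧ lexLe (shft^[n] x) v)
    (hU : ∀ n, orbOf α β u n < 1) (hV : ∀ n, 0 < orbOf α β v n)
    {c c' : ℝ} (hYc : ∀ x ∈ Y, ∀ n, orbOf α β x n ≤ c) {M : ℕ} (hM : 1 ≤ β ^ M * (c' - c))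
    {N : ℕ} (hN : ∀ i j, orbOf α β u i < orbOf α β v j → ∃ l p q, l ≤ N ∧
      orbOf α β u i ≤ p ∧ q ≤ orbOf α β v j ∧ 1 / ((N : ℝ) + 1) ≤ q - p ∧
      ∀ z ∈ Set.Ioo p q, c' < (Tlow α β)^[l] z) (n : ℕ) :
    volume (BB α β u v Y (n + (N + M))) ≤
      ENNReal.ofReal (1 - 1 / ((N : ℝ) + 1)) * volume (BB α β u v Y n) := by
  have hβ := S.hβ
  have hpn : 0 < β ^ n := by positivity
  have hε : 0 < 1 / ((N : ℝ) + 1) := by positivity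
  have hε1 : 1 / ((N : ℝ) + 1) ≤ 1 := by
    rw [div_le_one (by positivity)]
    linarith [(Nat.cast_nonneg N : (0 : ℝ) ≤ N)]
  have main : ∀ w : Wd Y n, volume (BB α β u v Y (n + (N + M)) ∩ Cyl α β u v (rep w) n) ≤
      ENNReal.ofReal (1 - 1 / ((N : ℝ) + 1)) * volume (Cyl α β u v (rep w) n) := by
    intro w
    set x := rep w with hx
    have hxY := hY x (rep_mem w)
    have hlt := S.lo_lt_hi hU hV hxY n
    obtain ⟨l, p, q, hl, hp, hq, hpq, hh⟩ := hN _ _ hlt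
    change lo α β u x n ≤ p at hp
    change q ≤ lo α β v x n at hq
    set a := lo α β u x n with ha
    set b := lo α β v x n with hb
    set d := aff α β x 0 n with hd
    have hsub : BB α β u v Y (n + (N + M)) ∩ Cyl α β u v x n ⊆
        Set.Ioc ((a - d) / β ^ n) ((p - d) / β ^ n) ∪
        Set.Ico ((q - d) / β ^ n) ((b - d) / β ^ n) := by
      rintro y ⟨y1, y2⟩
      have e := aff_eq (α := α) (β := β) x y n
      have t1 : (Tlow α β)^[l + n] y ≤ c' :=
        S.orb_hole hY hYc hM (S.BB_anti hY (show l + n + M ≤ n + (N + M) by omega) y1)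
      rw [Function.iterate_add_apply, S.Cyl_T hxY y2 le_rfl] at t1
      obtain ⟨z1, z2⟩ := y2
      rw [← ha] at z1
      rw [← hb] at z2
      rw [← hd] at e
      by_cases hc : aff α β x y n ≤ p
      · left
        rw [Set.mem_Ioc, div_lt_iff₀ hpn, le_div_iff₀ hpn]
        constructor <;> linarith
      · right
        push Not at hc
        have : q ≤ aff α β x y n := by
          by_contra hcon
          push Not at hcon
          exact absurd (hh _ ⟨hc, hcon⟩) (not_lt.2 t1)
        rw [Set.mem_Ico, div_le_iff₀ hpn, lt_div_iff₀ hpn]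
        constructor <;> linarith
    calc _ ≤ _ := measure_mono hsub
      _ ≤ _ := measure_union_le _ _
      _ = ENNReal.ofReal ((p - a) / β ^ n) + ENNReal.ofReal ((b - q) / β ^ n) := by
        rw [Real.volume_Ioc, Real.volume_Ico]
        congr 2 <;> ring
      _ = ENNReal.ofReal ((p - a) / β ^ n + (b - q) / β ^ n) := by
        rw [ENNReal.ofReal_add]
        · exact div_nonneg (by linarith) hpn.le
        · exact div_nonneg (by linarith) hpn.le
      _ ≤ ENNReal.ofReal ((1 - 1 / ((N : ℝ) + 1)) * ((b - a) / β ^ n)) := by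
        apply ENNReal.ofReal_le_ofReal
        rw [← add_div, ← mul_div_assoc]
        gcongr
        have h1 : b ≤ 1 := S.orbV.le_one _
        have h2 : 0 ≤ a := S.orbU.nonneg _
        have : 1 / ((N : ℝ) + 1) * (b - a) ≤ 1 / ((N : ℝ) + 1) * 1 := by
          gcongr; linarith
        linarith
      _ = _ := by
        rw [ENNReal.ofReal_mul (by linarith), Cyl_vol (by linarith)]
  calc volume (BB α β u v Y (n + (N + M)))
      ≤ volume (⋃ w : Wd Y n, BB α β u v Y (n + (N + M)) ∩ Cyl α β u v (rep w) n) := by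
        apply measure_mono
        rw [← Set.inter_iUnion, ← BB_eq]
        exact Set.subset_inter le_rfl (S.BB_anti hY (by omega))
    _ ≤ ∑' w : Wd Y n, volume (BB α β u v Y (n + (N + M)) ∩ Cyl α β u v (rep w) n) :=
        measure_iUnion_le _
    _ ≤ ∑' w : Wd Y n, ENNReal.ofReal (1 - 1 / ((N : ℝ) + 1)) * volume (Cyl α β u v (rep w) n) :=
        ENNReal.tsum_le_tsum main
    _ = _ := by rw [ENNReal.tsum_mul_left, S.BB_vol hY]

lemma Setup.words_upper (S : Setup k u v α β) {Y : Set (ℕ → ℕ)}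
    (hY : ∀ x ∈ Y, ∀ n, lexLe u (shft^[n] x) ∧ lexLe (shft^[n] x) v)
    (hU : ∀ n, orbOf α β u n < 1) (hV : ∀ n, 0 < orbOf α β v n)
    {c : ℝ} (hc0 : 0 ≤ c) (hc1 : c < 1) (hYc : ∀ x ∈ Y, ∀ n, orbOf α β x n ≤ c) {P Q : ℕ}
    (hP : 1 ≤ P) (hQ : 1 ≤ Q) (hPu : shft^[P] u = u) (hQv : shft^[Q] v = v) :
    ∃ (θ C : ℝ) (L : ℕ), 0 < θ ∧ θ < 1 ∧ 0 < C ∧ 1 ≤ L ∧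
      ∀ n, (Nat.card (Wd Y n) : ℝ) ≤ C * β ^ n * θ ^ (n / L) := by
  have hβ := S.hβ
  obtain ⟨N0, hN0⟩ := S.hole_unif (c := (1 + c) / 2) (by linarith) (by linarith) hP hQ hPu hQv
  -- enlarge `N` so that the factor is positive
  obtain ⟨N, hN1, hN⟩ : ∃ N : ℕ, 1 ≤ N ∧ ∀ i j, orbOf α β u i < orbOf α β v j → ∃ l p q, l ≤ N ∧
      orbOf α β u i ≤ p ∧ q ≤ orbOf α β v j ∧ 1 / ((N : ℝ) + 1) ≤ q - p ∧
      ∀ z ∈ Set.Ioo p q, (1 + c) / 2 < (Tlow α β)^[l] z := by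
    refine ⟨N0 + 1, by omega, fun i j hij => ?_⟩
    obtain ⟨l, p, q, h1, h2, h3, h4, h5⟩ := hN0 i j hij
    refine ⟨l, p, q, by omega, h2, h3, le_trans ?_ h4, h5⟩
    push_cast
    gcongr
    linarith
  obtain ⟨M, hM⟩ := pow_unbounded_of_one_lt (1 / ((1 + c) / 2 - c)) hβ
  rw [div_lt_iff₀ (by linarith)] at hM
  have hN' : (1 : ℝ) ≤ N := by exact_mod_cast hN1
  have hε : 0 < 1 / ((N : ℝ) + 1) := by positivity
  have hε1 : 1 / ((N : ℝ) + 1) < 1 := by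
    rw [div_lt_one (by positivity)]; linarith
  set ε := 1 / ((N : ℝ) + 1) with hεd
  refine ⟨1 - ε, 1 / ε, N + M, by linarith, by linarith, by positivity, by omega, ?_⟩
  have hcon := S.contract hY hU hV hYc hM.le hN
  rw [← hεd] at hcon
  have hpow : ∀ m, volume (BB α β u v Y ((N + M) * m)) ≤ ENNReal.ofReal ((1 - ε) ^ m) := by
    intro m
    induction m with
    | zero => simpa using S.BB_zero Y
    | succ m ih =>
      rw [Nat.mul_succ]
      refine (hcon _).trans ?_
      rw [pow_succ', ENNReal.ofReal_mul (by linarith)]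
      gcongr
  intro n
  have hpn : 0 < β ^ n := by positivity
  have hb : volume (BB α β u v Y n) ≤ ENNReal.ofReal ((1 - ε) ^ (n / (N + M))) :=
    (measure_mono (S.BB_anti hY (Nat.mul_div_le n (N + M)))).trans (hpow _)
  have hlow : (Nat.card (Wd Y n) : ENNReal) * ENNReal.ofReal (ε / β ^ n) ≤
      volume (BB α β u v Y n) := by
    rw [S.BB_vol hY]
    calc (Nat.card (Wd Y n) : ENNReal) * ENNReal.ofReal (ε / β ^ n)
        ≤ ∑' w : Wd Y n, ENNReal.ofReal (ε / β ^ n) := by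
          rw [ENNReal.tsum_const]
          gcongr
          rcases finite_or_infinite (Wd Y n) with h | h
          · rw [ENat.card_eq_coe_natCard]; simp
          · simp
      _ ≤ _ := by
          apply ENNReal.tsum_le_tsum
          intro w
          rw [Cyl_vol (by linarith)]
          apply ENNReal.ofReal_le_ofReal
          gcongr
          obtain ⟨l, p, q, _, h2, h3, h4, _⟩ := hN _ _ (S.lo_lt_hi hU hV (hY _ (rep_mem w)) n)
          unfold lo
          linarith
  have := hlow.trans hb
  rw [← ENNReal.ofReal_natCast, ← ENNReal.ofReal_mul (by positivity)] at this
  rw [ENNReal.ofReal_le_ofReal_iff (pow_nonneg (by linarith) _)] at this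
  calc (Nat.card (Wd Y n) : ℝ) = (Nat.card (Wd Y n) * (ε / β ^ n)) * (1 / ε * β ^ n) := by
        field_simp
    _ ≤ (1 - ε) ^ (n / (N + M)) * (1 / ε * β ^ n) := by gcongr
    _ = _ := by ring

lemma ent_upper (hβ : 1 < β) {w : ℕ → ℕ} (hmem : u ∈ SigSet k u w) {θ C : ℝ} {L : ℕ}
    (hθ : 0 < θ) (hθ1 : θ < 1) (hC : 0 < C) (hL : 1 ≤ L)
    (h : ∀ n, (nWords k u w n : ℝ) ≤ C * β ^ n * θ ^ (n / L)) :
    (2 : ℝ) ^ entS k u w < β := by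
  have hL' : (0 : ℝ) < L := by exact_mod_cast hL
  have hlθ : Real.logb 2 θ < 0 := Real.logb_neg (by norm_num) hθ hθ1
  have hpos : ∀ n, 1 ≤ nWords k u w n := by
    intro n
    have := words_finite k u w n
    have : Nonempty {w' : Fin n → ℕ // ∃ x ∈ SigSet k u w, ∀ i : Fin n, x i.1 = w' i} :=
      ⟨⟨fun i => u i, u, hmem, fun i => rfl⟩⟩
    exact Nat.one_le_iff_ne_zero.2 Nat.card_pos.ne'
  have hbd : ∀ n : ℕ, 1 ≤ n → Real.logb 2 (nWords k u w n) / (n : ℝ) ≤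
      (Real.logb 2 C - Real.logb 2 θ) / n + (Real.logb 2 β + Real.logb 2 θ / L) := by
    intro n hn
    have hn' : (0 : ℝ) < n := by exact_mod_cast hn
    have h1 : (1 : ℝ) ≤ nWords k u w n := by exact_mod_cast hpos n
    have h2 : Real.logb 2 (nWords k u w n) ≤ Real.logb 2 (C * β ^ n * θ ^ (n / L)) :=
      Real.logb_le_logb_of_le (by norm_num) (by linarith) (h n)
    rw [Real.logb_mul (by positivity) (by positivity), Real.logb_mul (by positivity) (by positivity),
      Real.logb_pow, Real.logb_pow] at h2
    have h3 : (n : ℝ) / L - 1 ≤ (n / L : ℕ) := by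
      have : n < L * (n / L + 1) := Nat.lt_mul_div_succ n (by omega)
      have : (n : ℝ) < L * ((n / L : ℕ) + 1) := by exact_mod_cast this
      rw [sub_le_iff_le_add, div_le_iff₀ hL']
      linarith
    have h4 : ((n / L : ℕ) : ℝ) * Real.logb 2 θ ≤ ((n : ℝ) / L - 1) * Real.logb 2 θ :=
      mul_le_mul_of_nonpos_right h3 hlθ.le
    rw [div_le_iff₀ hn']
    have e : ((Real.logb 2 C - Real.logb 2 θ) / n + (Real.logb 2 β + Real.logb 2 θ / L)) * n =
      Real.logb 2 C + n * Real.logb 2 β + ((n : ℝ) / L - 1) * Real.logb 2 θ := by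
      field_simp; ring
    rw [e]; linarith
  have hlim : Tendsto (fun n : ℕ => (Real.logb 2 C - Real.logb 2 θ) / (n : ℝ) +
      (Real.logb 2 β + Real.logb 2 θ / L)) atTop (nhds (0 + (Real.logb 2 β + Real.logb 2 θ / L))) :=
    (tendsto_const_div_atTop_nhds_zero_nat _).add tendsto_const_nhds
  have hle : entS k u w ≤ 0 + (Real.logb 2 β + Real.logb 2 θ / L) := by
    rw [← hlim.limsup_eq]
    unfold entS
    apply Filter.limsup_le_limsup
    · filter_upwards [eventually_ge_atTop 1] with n hn using hbd n hn
    · refine Filter.IsCoboundedUnder.of_frequently_ge (a := 0) ?_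
      apply Filter.Eventually.frequently
      filter_upwards with n
      apply div_nonneg _ (Nat.cast_nonneg n)
      apply Real.logb_nonneg (by norm_num)
      exact_mod_cast hpos n
    · exact hlim.isBoundedUnder_le
  have hlt : entS k u w < Real.logb 2 β := by
    have : Real.logb 2 θ / L < 0 := div_neg_of_neg_of_pos hlθ hL'
    linarith
  calc (2 : ℝ) ^ entS k u w < (2 : ℝ) ^ Real.logb 2 β :=
        Real.rpow_lt_rpow_of_exponent_lt (by norm_num) hlt
    _ = β := by
        rw [Real.rpow_logb (by norm_num) (by norm_num) (by linarith)]

/-- Strict entropy drop in the periodic good case. -/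
lemma Setup.ent_drop (S : Setup k u v α β) (hu : ∀ i, u i < k)
    (hU : ∀ n, orbOf α β u n < 1) (hV : ∀ n, 0 < orbOf α β v n)
    {P Q : ℕ} (hP : 1 ≤ P) (hQ : 1 ≤ Q) (hPu : shft^[P] u = u) (hQv : shft^[Q] v = v)
    {w : ℕ → ℕ} (hw : ∀ n, lexLe (shft^[n] u) w)
    (hlub : ∀ w' : ℕ → ℕ, (∀ i, w' i < k) → (∀ n, lexLe (shft^[n] u) w') → lexLe w w') :
    (2 : ℝ) ^ entS k u w < β := by
  have hβ0 : 0 < β := by linarith [S.hβ]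
  obtain ⟨m, hm⟩ : ∃ m, ∀ n, lexLe (shft^[n] u) (shft^[m] u) := by
    obtain ⟨m, _, hm⟩ := Finset.exists_max_image (Finset.range P) (fun n => toLex (shft^[n] u))
      ⟨0, by simp; omega⟩
    refine ⟨m, fun n => ?_⟩
    have per : Function.Periodic (fun n => shft^[n] u) P := by
      intro n; simp only [Function.iterate_add_apply, hPu]
    have e : shft^[n % P] u = shft^[n] u := per.map_mod_nat n
    rw [← e, lexLe_iff]
    exact hm _ (by simpa using Nat.mod_lt _ hP)
  have hwm : lexLe w (shft^[m] u) := hlub _ (fun i => by rw [shft_iter]; exact hu _) hm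
  have hY : ∀ x ∈ SigSet k u w, ∀ n, lexLe u (shft^[n] x) ∧ lexLe (shft^[n] x) v :=
    fun x hx n => ⟨(hx.2 n).1, lexLe_trans (hx.2 n).2 (lexLe_trans hwm (Or.inr (S.hcond m).2.1))⟩
  have hYc : ∀ x ∈ SigSet k u w, ∀ n, orbOf α β x n ≤ orbOf α β u m :=
    fun x hx n => phi_mono hβ0 (lexLe_trans (hx.2 n).2 hwm)
  obtain ⟨θ, C, L, h1, h2, h3, h4, h5⟩ := S.words_upper hY hU hV (S.orbU.nonneg m) (hU m) hYc
    hP hQ hPu hQv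
  exact ent_upper S.hβ ⟨hu, fun n => ⟨(S.hcond n).1, hw n⟩⟩ h1 h2 h3 h4 h5

end InvP

/-- **Inverse problem for `βx + α mod 1` (first form).** Let `k ≥ 2`, `u, v ∈ A^ℕ` with
`u₀ = 0`, `v₀ = k−1`, `u ≼ σⁿu ≺ v` and `u ≺ σⁿv ≼ v` for all `n ≥ 0` (for `k = 2`
additionally `σu ≼ σv`). Let `û = sup{σⁿu : n ≥ 0}` (the least upper bound in `A^ℕ`
for the lexicographic order) and `β̂ = 2^{h(Σ(u,û))}`. Suppose
`(ᾱ,β̄) ∈ [0,1] × (1,∞)` satisfies `φ̄_∞^{ᾱ,β̄}(σu) = ᾱ` and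
`φ̄_∞^{ᾱ,β̄}(σv) = ᾱ+β̄−k+1`. Then: (1) if `β̂ < β̄`, then `u = u^{ᾱ,β̄}` and
`v = v^{ᾱ,β̄}`; (2) if `β̂ = β̄` and `u^{ᾱ,β̄}`, `v^{ᾱ,β̄}` are not both periodic, the
same conclusion holds; (3) if `β̂ = β̄` and both are periodic, then `u ≠ u^{ᾱ,β̄}` and
`v ≠ v^{ᾱ,β̄}`. -/
theorem inverse_problem_first_form (k : ℕ) (hk : 2 ≤ k) (u v : ℕ → ℕ)
    (hu : ∀ i, u i < k) (hv : ∀ i, v i < k)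
    (hu0 : u 0 = 0) (hv0 : v 0 = k - 1)
    (hcond : ∀ n, lexLe u (shft^[n] u) ∧ lexLt (shft^[n] u) v ∧
                  lexLt u (shft^[n] v) ∧ lexLe (shft^[n] v) v)
    (hk2 : k = 2 → lexLe (shft u) (shft v))
    (uhat : ℕ → ℕ) (huhat : ∀ i, uhat i < k)
    (huhat_ub : ∀ n, lexLe (shft^[n] u) uhat)
    (huhat_lub : ∀ w : ℕ → ℕ, (∀ i, w i < k) →
      (∀ n, lexLe (shft^[n] u) w) → lexLe uhat w)
    (αb βb : ℝ) (hαb : αb ∈ Set.Icc (0 : ℝ) 1) (hβb : 1 < βb)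
    (hequ : phiBInf αb βb (shft u) = αb)
    (heqv : phiBInf αb βb (shft v) = αb + βb - k + 1) :
    ((2 : ℝ) ^ entS k u uhat < βb → u = uItin αb βb ∧ v = vItin αb βb) ∧
    ((2 : ℝ) ^ entS k u uhat = βb →
      ¬((∃ p, 1 ≤ p ∧ shft^[p] (uItin αb βb) = uItin αb βb) ∧
        (∃ q, 1 ≤ q ∧ shft^[q] (vItin αb βb) = vItin αb βb)) →
      u = uItin αb βb ∧ v = vItin αb βb) ∧
    ((2 : ℝ) ^ entS k u uhat = βb →
      ((∃ p, 1 ≤ p ∧ shft^[p] (uItin αb βb) = uItin αb βb) ∧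
       (∃ q, 1 ≤ q ∧ shft^[q] (vItin αb βb) = vItin αb βb)) →
      u ≠ uItin αb βb ∧ v ≠ vItin αb βb) := by
  have S : InvP.Setup k u v αb βb :=
    ⟨hk, hu0, hv0, hcond, hαb.1, hαb.2, hβb, hequ, heqv⟩
  have good_or : (u = uItin αb βb ∧ v = vItin αb βb) ∨
      (βb ≤ (2 : ℝ) ^ entS k u uhat ∧
      (∃ p, 1 ≤ p ∧ shft^[p] (uItin αb βb) = uItin αb βb) ∧
      (∃ q, 1 ≤ q ∧ shft^[q] (vItin αb βb) = vItin αb βb)) := by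
    by_cases hb : ∃ n, InvP.orbOf αb βb u n = 1
    · right
      obtain ⟨n, hn⟩ := hb
      obtain ⟨j, hj⟩ := S.bad_uv hn
      exact ⟨S.ent_lower hn (huhat_ub n), S.bad_u_periodic hn, S.bad_v_periodic hj⟩
    · left
      push Not at hb
      refine ⟨S.good_u fun n => lt_of_le_of_ne (S.orbU.le_one n) (hb n), S.good_v fun n => ?_⟩
      refine lt_of_le_of_ne (S.orbV.nonneg n) (fun h => ?_)
      obtain ⟨j, hj⟩ := S.bad_vu h.symm
      exact hb j hj
  refine ⟨fun h => ?_, fun _ hper => ?_, fun h hper => ?_⟩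
  · rcases good_or with hg | hb
    · exact hg
    · exact absurd h (not_lt.2 hb.1)
  · rcases good_or with hg | hb
    · exact hg
    · exact absurd hb.2 hper
  · have key : ¬ ((∀ n, InvP.orbOf αb βb u n < 1) ∧ (∀ n, 0 < InvP.orbOf αb βb v n)) := by
      rintro ⟨hU, hV⟩
      obtain ⟨⟨P, hP, hPu⟩, ⟨Q, hQ, hQv⟩⟩ := hper
      rw [← S.good_u hU] at hPu
      rw [← S.good_v hV] at hQv
      exact absurd h (S.ent_drop hu hU hV hP hQ hPu hQv huhat_ub huhat_lub).ne
    constructor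
    · intro hcu
      have hU := S.u_good hcu
      refine key ⟨hU, fun n => lt_of_le_of_ne (S.orbV.nonneg n) (fun h => ?_)⟩
      obtain ⟨j, hj⟩ := S.bad_vu h.symm
      exact absurd hj (hU j).ne
    · intro hcv
      have hV := S.v_good hcv
      refine key ⟨fun n => lt_of_le_of_ne (S.orbU.le_one n) (fun h => ?_), hV⟩
      obtain ⟨j, hj⟩ := S.bad_uv h
      exact absurd hj (hV j).ne'
end
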